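/- arXiv:2102.00042 — 4 statements merged into one kernel-verified Lean document; each statement's English description precedes it below -/
import Mathlib

section
/- There exists k₀ ∈ (0,1/4) such that for all ε, k with 0 < ε < k < k₀ the following holds. Fix x < x' in [−1,1] and y' ∈ [0, f(x')], and for y ≥ 0 with (x,y) ∈ X and (1/2)·(x'−x) < y'−y < x'−x define ỹ(y) = (1/2)·( y/f(x) + (y + (x'−x)/2)/f(x') )·f((x+x')/2) − y and G(y) = y + ỹ(y) + ( (x'−x)/2 − ỹ(y) )·( 2·(y'−y)/(x'−x) − 1 ). Then G is differentiable with G'(y) ≥ 1/2 − 3k − (2k² + 3k)/(1−2k)² > 0; in particular G is strictly increasing on this set of y. -/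
/-!
Write `h = x' - x` and let `D` be the slope of the affine function `ỹ`. Then
`G'(y) = 2 (h - (y' - y) + y) / h * D + f ((x + x') / 2) / (2 f x')`.
Since `f` is nondecreasing with slope at most `k`, one has `D ≥ -k h / (2 f x')`, and the last
summand is at least `1 / 2 - k h / (2 f x')`. The constraints on `y` bound both
`h - (y' - y) + y` and `h / 2` by `y' ≤ f x'`, so each of the two terms loses at most `k`
and `G'(y) ≥ 1 / 2 - 2 k`.
-/

open Set MeasureTheory

lemma sub_mem_Icc_zero_integral_of_hasDerivAt {F φ : ℝ → ℝ} (hF : ∀ t, HasDerivAt F (φ t) t)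
    (hφ : Integrable φ) (hφ_nonneg : ∀ t, 0 ≤ φ t) {a b : ℝ} (hab : a ≤ b) :
    F b - F a ∈ Icc 0 (∫ t, φ t) := by
  have hFTC : ∫ t in a..b, φ t = F b - F a :=
    intervalIntegral.integral_eq_sub_of_hasDerivAt (fun t _ => hF t) hφ.intervalIntegrable
  rw [← hFTC]
  refine ⟨intervalIntegral.integral_nonneg hab fun t _ => hφ_nonneg t, ?_⟩
  rw [intervalIntegral.integral_of_le hab]
  exact setIntegral_le_integral hφ (.of_forall hφ_nonneg)

lemma sub_mem_Icc_of_hasDerivAt_mem_Icc {f f' : ℝ → ℝ} {m M a b : ℝ} (hab : a ≤ b)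
    (hf : ∀ t ∈ Icc a b, HasDerivAt f (f' t) t) (hf' : ∀ t ∈ Icc a b, f' t ∈ Icc m M) :
    f b - f a ∈ Icc (m * (b - a)) (M * (b - a)) := by
  have hcont : ContinuousOn f (Icc a b) := HasDerivAt.continuousOn hf
  have hdiff : DifferentiableOn ℝ f (interior (Icc a b)) := fun t ht =>
    (hf t (interior_subset ht)).differentiableAt.differentiableWithinAt
  have hderiv : ∀ t ∈ interior (Icc a b), deriv f t ∈ Icc m M := fun t ht =>
    (hf t (interior_subset ht)).deriv ▸ hf' t (interior_subset ht)
  have ha : a ∈ Icc a b := left_mem_Icc.2 hab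
  have hb : b ∈ Icc a b := right_mem_Icc.2 hab
  exact ⟨(convex_Icc a b).mul_sub_le_image_sub_of_le_deriv hcont hdiff
      (fun t ht => (hderiv t ht).1) a ha b hb hab,
    (convex_Icc a b).image_sub_le_mul_sub_of_deriv_le hcont hdiff
      (fun t ht => (hderiv t ht).2) a ha b hb hab⟩

/-- The shift `ỹ(y)`: the average of the heights of `(x, y)` and `(x', y + (x' - x) / 2)` relative
to the graph of `f`, rescaled to the fibre over the midpoint of `x` and `x'`, minus `y`. -/
noncomputable def midpointShift (f : ℝ → ℝ) (x x' y : ℝ) : ℝ :=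
  (1 / 2) * (y / f x + (y + (x' - x) / 2) / f x') * f ((x + x') / 2) - y

/-- The function `G`, whose monotonicity in `y` is at stake; `y'` is the height of the endpoint
over `x'`. -/
noncomputable def midpointHeight (f : ℝ → ℝ) (x x' y' y : ℝ) : ℝ :=
  y + midpointShift f x x' y +
    ((x' - x) / 2 - midpointShift f x x' y) * (2 * (y' - y) / (x' - x) - 1)

/-- The slope of the affine function `midpointShift f x x'`. -/
noncomputable def midpointShiftSlope (f : ℝ → ℝ) (x x' : ℝ) : ℝ :=
  (1 / 2) * (1 / f x + 1 / f x') * f ((x + x') / 2) - 1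

/-- The heights `y ≥ 0` for which the segment from `(x, y)` to `(x', y')` has slope between
`1 / 2` and `1`. -/
def admissibleHeights (x x' y' : ℝ) : Set ℝ :=
  Ici 0 ∩ Icc (y' - (x' - x)) (y' - (x' - x) / 2)

section

variable {f : ℝ → ℝ} {x x' y y' k : ℝ}

lemma convex_admissibleHeights : Convex ℝ (admissibleHeights x x' y') :=
  (convex_Ici 0).inter (convex_Icc _ _)

lemma midpointShift_eq_slope_mul_add :
    midpointShift f x x' y =
      midpointShiftSlope f x x' * y + (x' - x) / 4 * (f ((x + x') / 2) / f x') := by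
  unfold midpointShift midpointShiftSlope
  ring

lemma hasDerivAt_midpointShift :
    HasDerivAt (midpointShift f x x') (midpointShiftSlope f x x') y := by
  rw [funext fun z => midpointShift_eq_slope_mul_add (f := f) (x := x) (x' := x') (y := z)]
  simpa using ((hasDerivAt_id' y).const_mul (midpointShiftSlope f x x')).add_const
    ((x' - x) / 4 * (f ((x + x') / 2) / f x'))

lemma hasDerivAt_midpointHeight (hxx' : x < x') :
    HasDerivAt (midpointHeight f x x' y')
      (2 * (x' - x - (y' - y) + y) / (x' - x) * midpointShiftSlope f x x' +
        f ((x + x') / 2) / f x' / 2) y := by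
  have hshift := hasDerivAt_midpointShift (f := f) (x := x) (x' := x') (y := y)
  have hweight : HasDerivAt (fun z => 2 * (y' - z) / (x' - x) - 1) (2 * -1 / (x' - x)) y :=
    ((((hasDerivAt_id' y).const_sub y').const_mul 2).div_const (x' - x)).sub_const 1
  refine (((hasDerivAt_id' y).add hshift).add
    ((hshift.const_sub ((x' - x) / 2)).mul hweight)).congr_deriv ?_
  have hne : x' - x ≠ 0 := (sub_pos.2 hxx').ne'
  rw [midpointShift_eq_slope_mul_add]
  generalize f ((x + x') / 2) / f x' = q
  field_simp
  ring

lemma neg_sub_div_le_midpointShiftSlope (hfx : 0 < f x) (hfx' : 0 < f x')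
    (hmid : f x ≤ f ((x + x') / 2)) :
    -((f x' - f x) / f x' / 2) ≤ midpointShiftSlope f x x' :=
  calc -((f x' - f x) / f x' / 2) = (1 / 2) * (1 / f x + 1 / f x') * f x - 1 := by
        field_simp
        ring
    _ ≤ midpointShiftSlope f x x' := by
        unfold midpointShiftSlope
        gcongr

lemma half_sub_two_mul_le_deriv_midpointHeight (hxx' : x < x') (hfx : 0 < f x)
    (hmid : f x ≤ f ((x + x') / 2)) (hmono : f x ≤ f x') (hlip : f x' - f x ≤ k * (x' - x))
    (hy' : y' ≤ f x') (hy : y ∈ admissibleHeights x x' y') :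
    1 / 2 - 2 * k ≤ deriv (midpointHeight f x x' y') y := by
  rw [(hasDerivAt_midpointHeight hxx').deriv]
  obtain ⟨hy_nonneg : 0 ≤ y, hy_lower, hy_upper⟩ := hy
  have hfx' : 0 < f x' := hfx.trans_le hmono
  have hh : 0 < x' - x := sub_pos.2 hxx'
  set w := x' - x - (y' - y) + y
  have hw_nonneg : 0 ≤ w := by linarith
  have hw_add : w + (x' - x) / 2 ≤ 2 * f x' := by linarith
  set r := (f x' - f x) / f x' with hr
  have hslope : -(r / 2) ≤ midpointShiftSlope f x x' :=
    neg_sub_div_le_midpointShiftSlope hfx hfx' hmid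
  have hratio : 1 - r ≤ f ((x + x') / 2) / f x' := by
    rw [hr, one_sub_div hfx'.ne', sub_sub_cancel]
    gcongr
  have hk : 0 ≤ k := nonneg_of_mul_nonneg_left ((sub_nonneg.2 hmono).trans hlip) hh
  have hr_le : r ≤ k * (x' - x) / f x' := div_le_div_of_nonneg_right hlip hfx'.le
  have hloss : r * ((w + (x' - x) / 2) / (x' - x)) ≤ 2 * k :=
    calc r * ((w + (x' - x) / 2) / (x' - x))
        ≤ k * (x' - x) / f x' * (2 * f x' / (x' - x)) := by gcongr
      _ = 2 * k := by field_simp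
  calc 1 / 2 - 2 * k ≤ 1 / 2 - r * ((w + (x' - x) / 2) / (x' - x)) := by linarith
    _ = 2 * w / (x' - x) * -(r / 2) + (1 - r) / 2 := by
        field_simp
        ring
    _ ≤ 2 * w / (x' - x) * midpointShiftSlope f x x' + f ((x + x') / 2) / f x' / 2 := by gcongr

end

lemma half_sub_three_mul_sub_div_pos {k : ℝ} (hk : k < 1 / 15) :
    0 < 1 / 2 - 3 * k - (2 * k ^ 2 + 3 * k) / (1 - 2 * k) ^ 2 := by
  have hden : 0 < 1 - 2 * k := by linarith
  rw [sub_pos, div_lt_iff₀ (by positivity)]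
  nlinarith

theorem stmt_11_general {k : ℝ} {φ f f' : ℝ → ℝ} (hφ : Integrable φ) (hφ_nonneg : ∀ t, 0 ≤ φ t)
    (hφ_int : ∫ t, φ t ≤ k) (hf : ∀ t, HasDerivAt f (f' t) t) (hf' : ∀ t, HasDerivAt f' (φ t) t)
    {a x x' y' : ℝ} (hf'a : f' a = 0) (hfa : 0 < f a) (hx : a ≤ x) (hxx' : x < x')
    (hy' : y' ≤ f x') :
    (∀ y ∈ admissibleHeights x x' y', ∃ g, HasDerivAt (midpointHeight f x x' y') g y ∧
      1 / 2 - 2 * k ≤ g) ∧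
    (k < 1 / 4 → StrictMonoOn (midpointHeight f x x' y') (admissibleHeights x x' y')) := by
  have hf'_mem : ∀ t, a ≤ t → f' t ∈ Icc 0 k := fun t ht => by
    have hmem := sub_mem_Icc_zero_integral_of_hasDerivAt hf' hφ hφ_nonneg ht
    rw [hf'a, sub_zero] at hmem
    exact Icc_subset_Icc_right hφ_int hmem
  have hincr : ∀ u v, a ≤ u → u ≤ v → f v - f u ∈ Icc 0 (k * (v - u)) := fun u v hu huv => by
    simpa only [zero_mul] using sub_mem_Icc_of_hasDerivAt_mem_Icc huv (fun t _ => hf t)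
      fun t ht => hf'_mem t (hu.trans ht.1)
  have hfx : 0 < f x := hfa.trans_le (sub_nonneg.1 (hincr a x le_rfl hx).1)
  have hmid : f x ≤ f ((x + x') / 2) := sub_nonneg.1 (hincr x _ hx (by linarith)).1
  obtain ⟨hmono, hlip⟩ := hincr x x' hx hxx'.le
  have hderiv : ∀ y, HasDerivAt (midpointHeight f x x' y') (deriv (midpointHeight f x x' y') y) y :=
    fun y => (hasDerivAt_midpointHeight hxx').differentiableAt.hasDerivAt
  have hbound : ∀ y ∈ admissibleHeights x x' y',
      1 / 2 - 2 * k ≤ deriv (midpointHeight f x x' y') y := fun y hy =>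
    half_sub_two_mul_le_deriv_midpointHeight hxx' hfx hmid (sub_nonneg.1 hmono) hlip hy' hy
  refine ⟨fun y hy => ⟨_, hderiv y, hbound y hy⟩, fun hk => ?_⟩
  refine strictMonoOn_of_deriv_pos convex_admissibleHeights
    (HasDerivAt.continuousOn fun y _ => hderiv y) fun y hy => ?_
  linarith [hbound y (interior_subset hy)]

theorem stmt_11 :
    ∃ k₀ : ℝ, k₀ ∈ Set.Ioo (0 : ℝ) (1 / 4) ∧ ∀ ε k : ℝ, 0 < ε → ε < k → k < k₀ →
    ∀ φ : ℝ → ℝ, Continuous φ → (∀ x, 0 ≤ φ x) → (∀ x, φ x ≤ 1) →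
      (∀ x, x ∉ Set.Icc (-k) k → φ x = 0) → (∫ x, φ x) = k →
    ∀ f f' : ℝ → ℝ, (∀ x, HasDerivAt f (f' x) x) → (∀ x, HasDerivAt f' (φ x) x) →
      f' (-1) = 0 → f (-1) = ε →
    ∀ x x' : ℝ, x ∈ Set.Icc (-1 : ℝ) 1 → x' ∈ Set.Icc (-1 : ℝ) 1 → x < x' →
    ∀ y' : ℝ, y' ∈ Set.Icc 0 (f x') →
    ∀ G : ℝ → ℝ,
      G = (fun y =>
        y + ((1 / 2) * (y / f x + (y + (x' - x) / 2) / f x') * f ((x + x') / 2) - y) +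
          ((x' - x) / 2 -
            ((1 / 2) * (y / f x + (y + (x' - x) / 2) / f x') * f ((x + x') / 2) - y)) *
            (2 * (y' - y) / (x' - x) - 1)) →
    ∀ S : Set ℝ,
      S = {y : ℝ | 0 ≤ y ∧ y ≤ f x ∧ (1 / 2) * (x' - x) < y' - y ∧ y' - y < x' - x} →
    ((1 : ℝ) / 2 - 3 * k - (2 * k ^ 2 + 3 * k) / (1 - 2 * k) ^ 2 > 0 ∧
      (∀ y ∈ S, ∃ g : ℝ, HasDerivAt G g y ∧
        (1 : ℝ) / 2 - 3 * k - (2 * k ^ 2 + 3 * k) / (1 - 2 * k) ^ 2 ≤ g) ∧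
      StrictMonoOn G S) := by
  refine ⟨1 / 15, by norm_num, ?_⟩
  rintro ε k hε hεk hk φ hφ hφ_nonneg - hφ_supp hφ_int f f' hf hf' hf'a rfl x x' ⟨hx, -⟩ - hxx' y'
    ⟨-, hy'⟩ G rfl S rfl
  have hφ_integrable : Integrable φ :=
    hφ.integrable_of_hasCompactSupport (.intro isCompact_Icc hφ_supp)
  obtain ⟨hderiv, hmono⟩ :=
    stmt_11_general hφ_integrable hφ_nonneg hφ_int.le hf hf' hf'a hε hx hxx' hy'
  have hsub : {y | 0 ≤ y ∧ y ≤ f x ∧ 1 / 2 * (x' - x) < y' - y ∧ y' - y < x' - x} ⊆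
      admissibleHeights x x' y' := fun y ⟨hy, _, hlower, hupper⟩ =>
    ⟨hy, by linarith, by linarith⟩
  have hk_pos : 0 < k := hε.trans hεk
  have hquot : 0 ≤ (2 * k ^ 2 + 3 * k) / (1 - 2 * k) ^ 2 := by positivity
  refine ⟨half_sub_three_mul_sub_div_pos hk, fun y hy => ?_,
    (hmono (by linarith)).mono hsub⟩
  obtain ⟨g, hg, hle⟩ := hderiv y (hsub hy)
  exact ⟨g, hg, by linarith⟩
end

section
/- Let x < x' in [−1,1] and let y satisfy 0 ≤ y ≤ f(x) and y + (x'−x)/2 ≤ f(x'). Set ỹ = (1/2)·( y/f(x) + (y + (x'−x)/2)/f(x') )·f((x+x')/2) − y. Then |ỹ − (x'−x)/4| ≤ (2k² + 4k)·((x'−x)/2)² / f(x'). -/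
/-!
Write `A`, `M`, `B` for the values of `f` at `x`, at the midpoint and at `x'`, and let
`h = (x' - x) / 2`. Multiplied by `B`, the error `ỹ - h / 2` is exactly
`(y / A) * ((M - A) * (B - M) - M * (A + B - 2 * M) / 2) - h * (B - M) / 2`,
in which every term is of second order: the increments are at most `k * h` because `0 ≤ f' ≤ k`, and
the second difference `A + B - 2 * M` lies in `[0, h ^ 2]` because `0 ≤ f'' ≤ 1`.
-/

open Set MeasureTheory

section MidpointSecondDifference

variable {E : Type*} [NormedAddCommGroup E] [NormedSpace ℝ E] {s : Set E} {f : E → ℝ} {x y : E}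

theorem two_mul_map_midpoint_le_of_convexOn (hf : ConvexOn ℝ s f) (hx : x ∈ s) (hy : y ∈ s) :
    2 * f (midpoint ℝ x y) ≤ f x + f y := by
  have hmid := hf.2 hx hy (inv_nonneg.2 zero_le_two) (inv_nonneg.2 zero_le_two) (by norm_num)
  rw [smul_eq_mul, smul_eq_mul] at hmid
  rw [midpoint_eq_smul_add, invOf_eq_inv, smul_add]
  linarith

theorem add_add_le_two_mul_map_midpoint_of_strongConcaveOn {m : ℝ} (hf : StrongConcaveOn s m f)
    (hx : x ∈ s) (hy : y ∈ s) :
    f x + f y + m / 4 * ‖x - y‖ ^ 2 ≤ 2 * f (midpoint ℝ x y) := by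
  have hmid := hf.2 hx hy (inv_nonneg.2 zero_le_two) (inv_nonneg.2 zero_le_two) (by norm_num)
  rw [smul_eq_mul, smul_eq_mul] at hmid
  rw [midpoint_eq_smul_add, invOf_eq_inv, smul_add]
  linarith

end MidpointSecondDifference

section DerivativeBounds

variable {D : Set ℝ} {f f' f'' : ℝ → ℝ} {a b c C : ℝ}

theorem image_sub_mem_Icc_of_hasDerivWithinAt_mem_Icc (hD : Convex ℝ D) (hf : ContinuousOn f D)
    (hf' : ∀ t ∈ interior D, HasDerivWithinAt f (f' t) (interior D) t)
    (hf'_mem : ∀ t ∈ interior D, f' t ∈ Icc c C) (ha : a ∈ D) (hb : b ∈ D) (hab : a ≤ b) :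
    f b - f a ∈ Icc (c * (b - a)) (C * (b - a)) := by
  have hdiff : DifferentiableOn ℝ f (interior D) := fun t ht ↦ (hf' t ht).differentiableWithinAt
  have hderiv : ∀ t ∈ interior D, deriv f t ∈ Icc c C := fun t ht ↦ by
    rw [deriv_eqOn isOpen_interior hf' ht]
    exact hf'_mem t ht
  exact ⟨hD.mul_sub_le_image_sub_of_le_deriv hf hdiff (fun t ht ↦ (hderiv t ht).1) a ha b hb hab,
    hD.image_sub_le_mul_sub_of_deriv_le hf hdiff (fun t ht ↦ (hderiv t ht).2) a ha b hb hab⟩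

theorem strongConcaveOn_neg_of_hasDerivWithinAt2_le (hD : Convex ℝ D) (hf : ContinuousOn f D)
    (hf' : ∀ t ∈ interior D, HasDerivWithinAt f (f' t) (interior D) t)
    (hf'' : ∀ t ∈ interior D, HasDerivWithinAt f' (f'' t) (interior D) t)
    (hf''_le : ∀ t ∈ interior D, f'' t ≤ C) : StrongConcaveOn D (-C) f := by
  rw [strongConcaveOn_iff_convex]
  simp only [Real.norm_eq_abs, sq_abs]
  refine concaveOn_of_hasDerivWithinAt2_nonpos (f' := fun t ↦ f' t + -C * t)
    (f'' := fun t ↦ f'' t + -C) hD (by fun_prop) (fun t ht ↦ ?_) (fun t ht ↦ ?_)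
    (fun t ht ↦ by linarith [hf''_le t ht])
  · refine ((hf' t ht).add ((hasDerivWithinAt_id t _).pow 2 |>.const_mul (-C / 2))).congr_deriv ?_
    simp only [id]
    ring
  · refine ((hf'' t ht).add ((hasDerivWithinAt_id t _).const_mul (-C))).congr_deriv ?_
    ring

theorem map_add_map_sub_two_mul_map_midpoint_mem_Icc (hD : Convex ℝ D) (hf : ContinuousOn f D)
    (hf' : ∀ t ∈ interior D, HasDerivWithinAt f (f' t) (interior D) t)
    (hf'' : ∀ t ∈ interior D, HasDerivWithinAt f' (f'' t) (interior D) t)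
    (hf''_mem : ∀ t ∈ interior D, f'' t ∈ Icc 0 C) (ha : a ∈ D) (hb : b ∈ D) :
    f a + f b - 2 * f (midpoint ℝ a b) ∈ Icc 0 (C * ((b - a) / 2) ^ 2) := by
  have hconvex : ConvexOn ℝ D f :=
    convexOn_of_hasDerivWithinAt2_nonneg hD hf hf' hf'' fun t ht ↦ (hf''_mem t ht).1
  have hconcave : StrongConcaveOn D (-C) f :=
    strongConcaveOn_neg_of_hasDerivWithinAt2_le hD hf hf' hf'' fun t ht ↦ (hf''_mem t ht).2
  have hlower := two_mul_map_midpoint_le_of_convexOn hconvex ha hb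
  have hupper := add_add_le_two_mul_map_midpoint_of_strongConcaveOn hconcave ha hb
  rw [Real.norm_eq_abs, sq_abs] at hupper
  constructor <;> linarith

theorem sub_le_integral_of_hasDerivAt_of_nonneg (hab : a ≤ b)
    (hf : ∀ t ∈ Icc a b, HasDerivAt f (f' t) t) (hf'_int : Integrable f') (hf'_nonneg : 0 ≤ f') :
    f b - f a ≤ ∫ t, f' t := by
  calc f b - f a = ∫ t in a..b, f' t := by
        rw [← uIcc_of_le hab] at hf
        exact (intervalIntegral.integral_eq_sub_of_hasDerivAt hf hf'_int.intervalIntegrable).symm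
    _ = ∫ t in Ioc a b, f' t := intervalIntegral.integral_of_le hab
    _ ≤ ∫ t, f' t := setIntegral_le_integral hf'_int (.of_forall hf'_nonneg)

end DerivativeBounds

section RelativeHeightMean

variable {A B M y h k K L : ℝ}

theorem half_mul_div_add_div_mul_sub_eq (hA : A ≠ 0) (hB : B ≠ 0) :
    1 / 2 * (y / A + (y + h) / B) * M - y - h / 2 =
      (y / A * ((M - A) * (B - M) - M * (A + B - 2 * M) / 2) - h * (B - M) / 2) / B := by
  field_simp
  ring

theorem half_mul_div_add_div_mul_sub_le (hA : 0 < A) (hAM : A ≤ M) (hMB : M ≤ B)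
    (hM : 2 * M ≤ A + B) (hh : 0 ≤ h) (hy : y ∈ Icc 0 A) :
    1 / 2 * (y / A + (y + h) / B) * M - y - h / 2 ≤ (M - A) * (B - M) / B := by
  have hB : 0 < B := by linarith
  rw [half_mul_div_add_div_mul_sub_eq hA.ne' hB.ne']
  gcongr
  have hratio : y / A ∈ Icc 0 1 := ⟨div_nonneg hy.1 hA.le, (div_le_one hA).2 hy.2⟩
  have hgap : 0 ≤ M * (A + B - 2 * M) := mul_nonneg (by linarith) (by linarith)
  have hincr : 0 ≤ (M - A) * (B - M) := mul_nonneg (by linarith) (by linarith)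
  have hshift : 0 ≤ h * (B - M) := mul_nonneg hh (by linarith)
  have hratio_incr := mul_le_of_le_one_left hincr hratio.2
  have hratio_gap := mul_nonneg hratio.1 hgap
  linarith

theorem neg_le_half_mul_div_add_div_mul_sub (hA : 0 < A) (hAM : A ≤ M) (hMB : M ≤ B)
    (hM : 2 * M ≤ A + B) (hy : y ∈ Icc 0 A) :
    -((M * (A + B - 2 * M) + h * (B - M)) / 2 / B) ≤
      1 / 2 * (y / A + (y + h) / B) * M - y - h / 2 := by
  have hB : 0 < B := by linarith
  rw [half_mul_div_add_div_mul_sub_eq hA.ne' hB.ne', ← neg_div]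
  gcongr
  have hratio : y / A ∈ Icc 0 1 := ⟨div_nonneg hy.1 hA.le, (div_le_one hA).2 hy.2⟩
  have hgap : 0 ≤ M * (A + B - 2 * M) := mul_nonneg (by linarith) (by linarith)
  have hincr : 0 ≤ (M - A) * (B - M) := mul_nonneg (by linarith) (by linarith)
  have hratio_incr := mul_nonneg hratio.1 hincr
  have hratio_gap := mul_le_of_le_one_left hgap hratio.2
  linarith

theorem abs_half_mul_div_add_div_mul_sub_le (hA : 0 < A) (hMA : M - A ∈ Icc 0 (k * h))
    (hBM : B - M ∈ Icc 0 (k * h)) (hgap : A + B - 2 * M ∈ Icc 0 (L * h ^ 2)) (hMK : M ≤ K)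
    (hh : 0 ≤ h) (hy : y ∈ Icc 0 A) :
    |1 / 2 * (y / A + (y + h) / B) * M - y - h / 2| ≤
      max (k ^ 2) ((K * L + k) / 2) * h ^ 2 / B := by
  have hAM : A ≤ M := sub_nonneg.1 hMA.1
  have hMB : M ≤ B := sub_nonneg.1 hBM.1
  have hM : 2 * M ≤ A + B := sub_nonneg.1 hgap.1
  have hB : 0 ≤ B := by linarith
  have hincr : (M - A) * (B - M) ≤ k ^ 2 * h ^ 2 := by
    rw [← mul_pow, sq]
    exact mul_le_mul hMA.2 hBM.2 hBM.1 (hMA.1.trans hMA.2)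
  have hMgap : M * (A + B - 2 * M) ≤ K * (L * h ^ 2) :=
    mul_le_mul hMK hgap.2 hgap.1 (by linarith)
  have hshift : h * (B - M) ≤ h * (k * h) := mul_le_mul_of_nonneg_left hBM.2 hh
  rw [abs_le]
  constructor
  · refine le_trans ?_ (neg_le_half_mul_div_add_div_mul_sub hA hAM hMB hM hy)
    refine neg_le_neg (div_le_div_of_nonneg_right ?_ hB)
    calc (M * (A + B - 2 * M) + h * (B - M)) / 2 ≤ (K * L + k) / 2 * h ^ 2 := by linarith
      _ ≤ max (k ^ 2) ((K * L + k) / 2) * h ^ 2 := by gcongr; exact le_max_right _ _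
  · refine (half_mul_div_add_div_mul_sub_le hA hAM hMB hM hh hy).trans ?_
    refine div_le_div_of_nonneg_right ?_ hB
    calc (M - A) * (B - M) ≤ k ^ 2 * h ^ 2 := hincr
      _ ≤ max (k ^ 2) ((K * L + k) / 2) * h ^ 2 := by gcongr; exact le_max_left _ _

theorem abs_half_mul_div_add_div_mul_map_midpoint_sub_le {D : Set ℝ} {f f' f'' : ℝ → ℝ} {x x' : ℝ}
    (hD : Convex ℝ D) (hf : ContinuousOn f D)
    (hf' : ∀ t ∈ interior D, HasDerivWithinAt f (f' t) (interior D) t)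
    (hf'' : ∀ t ∈ interior D, HasDerivWithinAt f' (f'' t) (interior D) t)
    (hf'_mem : ∀ t ∈ interior D, f' t ∈ Icc 0 k) (hf''_mem : ∀ t ∈ interior D, f'' t ∈ Icc 0 L)
    (hx : x ∈ D) (hx' : x' ∈ D) (hxx' : x ≤ x') (hfx : 0 < f x) (hfK : f (midpoint ℝ x x') ≤ K)
    (hy : y ∈ Icc 0 (f x)) :
    |1 / 2 * (y / f x + (y + (x' - x) / 2) / f x') * f (midpoint ℝ x x') - y - (x' - x) / 4| ≤
      max (k ^ 2) ((K * L + k) / 2) * ((x' - x) / 2) ^ 2 / f x' := by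
  have hm : midpoint ℝ x x' ∈ D := hD.midpoint_mem hx hx'
  have hleft := image_sub_mem_Icc_of_hasDerivWithinAt_mem_Icc hD hf hf' hf'_mem hx hm
    (left_le_midpoint.2 hxx')
  have hright := image_sub_mem_Icc_of_hasDerivWithinAt_mem_Icc hD hf hf' hf'_mem hm hx'
    (midpoint_le_right.2 hxx')
  have hgap := map_add_map_sub_two_mul_map_midpoint_mem_Icc hD hf hf' hf'' hf''_mem hx hx'
  rw [zero_mul, midpoint_sub_left, invOf_eq_inv, smul_eq_mul, inv_mul_eq_div] at hleft
  rw [zero_mul, right_sub_midpoint, invOf_eq_inv, smul_eq_mul, inv_mul_eq_div] at hright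
  rw [show (x' - x) / 4 = (x' - x) / 2 / 2 by ring]
  exact abs_half_mul_div_add_div_mul_sub_le hfx hleft hright hgap hfK (by linarith) hy

end RelativeHeightMean

theorem stmt_12_general {k : ℝ} {φ f f' : ℝ → ℝ}
    (hf : ∀ t ∈ Icc (-1 : ℝ) 1, HasDerivWithinAt f (f' t) (Icc (-1) 1) t)
    (hf' : ∀ t ∈ Icc (-1 : ℝ) 1, HasDerivWithinAt f' (φ t) (Icc (-1) 1) t)
    (hφ : ∀ t ∈ Icc (-1 : ℝ) 1, φ t ∈ Icc 0 1) (hf'_left : 0 ≤ f' (-1)) (hf'_right : f' 1 ≤ k)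
    (hf_pos : 0 < f (-1)) (hf_le : f (-1) ≤ k)
    {x x' y : ℝ} (hx : x ∈ Icc (-1 : ℝ) 1) (hx' : x' ∈ Icc (-1 : ℝ) 1) (hxx' : x ≤ x')
    (hy : y ∈ Icc 0 (f x)) :
    |1 / 2 * (y / f x + (y + (x' - x) / 2) / f x') * f ((x + x') / 2) - y - (x' - x) / 4| ≤
      max (k ^ 2) (2 * k) * ((x' - x) / 2) ^ 2 / f x' := by
  have hD : Convex ℝ (Icc (-1 : ℝ) 1) := convex_Icc _ _
  have hD_sub : interior (Icc (-1 : ℝ) 1) ⊆ Icc (-1) 1 := interior_subset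
  have hleft : (-1 : ℝ) ∈ Icc (-1 : ℝ) 1 := by simp
  have hright : (1 : ℝ) ∈ Icc (-1 : ℝ) 1 := by simp
  have hfc : ContinuousOn f (Icc (-1) 1) := fun t ht ↦ (hf t ht).continuousWithinAt
  have hf_int := fun t ht ↦ (hf t (hD_sub ht)).mono hD_sub
  have hf'_int := fun t ht ↦ (hf' t (hD_sub ht)).mono hD_sub
  have hf'_mono : MonotoneOn f' (Icc (-1) 1) := monotoneOn_of_hasDerivWithinAt_nonneg hD
    (fun t ht ↦ (hf' t ht).continuousWithinAt) hf'_int fun t ht ↦ (hφ t (hD_sub ht)).1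
  have hf'_mem : ∀ t ∈ interior (Icc (-1 : ℝ) 1), f' t ∈ Icc 0 k := fun t ht ↦
    ⟨hf'_left.trans (hf'_mono hleft (hD_sub ht) (hD_sub ht).1),
      (hf'_mono (hD_sub ht) hright (hD_sub ht).2).trans hf'_right⟩
  have hf_incr : ∀ t ∈ Icc (-1 : ℝ) 1, f t - f (-1) ∈ Icc 0 (k * (t - -1)) := fun t ht ↦ by
    simpa only [zero_mul] using
      image_sub_mem_Icc_of_hasDerivWithinAt_mem_Icc hD hfc hf_int hf'_mem hleft ht ht.1
  have hfx : 0 < f x := by linarith [(hf_incr x hx).1]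
  have hm := hD.midpoint_mem hx hx'
  have hfm : f (midpoint ℝ x x') ≤ 3 * k := by nlinarith [(hf_incr _ hm).2, hm.2]
  have hbound := abs_half_mul_div_add_div_mul_map_midpoint_sub_le hD hfc hf_int hf'_int hf'_mem
    (fun t ht ↦ hφ t (hD_sub ht)) hx hx' hxx' hfx hfm hy
  rwa [midpoint_eq_smul_add, invOf_eq_inv, smul_eq_mul, inv_mul_eq_div,
    show (3 * k * 1 + k) / 2 = 2 * k by ring] at hbound

theorem stmt_12 (ε k : ℝ) (hε : 0 < ε) (hεk : ε < k) (hk : k < 1 / 2)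
    (φ : ℝ → ℝ) (hφc : Continuous φ) (hφ0 : ∀ x, 0 ≤ φ x) (hφ1 : ∀ x, φ x ≤ 1)
    (hφsupp : ∀ x, x ∉ Set.Icc (-k) k → φ x = 0)
    (hφint : (∫ x, φ x) = k)
    (f f' : ℝ → ℝ)
    (hfd : ∀ x, HasDerivAt f (f' x) x)
    (hfd2 : ∀ x, HasDerivAt f' (φ x) x)
    (hf'm1 : f' (-1) = 0) (hfm1 : f (-1) = ε)
    (x x' y : ℝ) (hx : x ∈ Set.Icc (-1 : ℝ) 1) (hx' : x' ∈ Set.Icc (-1 : ℝ) 1)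
    (hlt : x < x') (hy0 : 0 ≤ y) (hyf : y ≤ f x) (hyf' : y + (x' - x) / 2 ≤ f x') :
    |(1 / 2) * (y / f x + (y + (x' - x) / 2) / f x') * f ((x + x') / 2) - y - (x' - x) / 4| ≤
      (2 * k ^ 2 + 4 * k) * ((x' - x) / 2) ^ 2 / f x' := by
  have hf'_right : f' 1 ≤ k := by
    simpa only [hf'm1, hφint, sub_zero] using sub_le_integral_of_hasDerivAt_of_nonneg
      (by norm_num : (-1 : ℝ) ≤ 1) (fun t _ ↦ hfd2 t)
      (.of_integral_ne_zero (by linarith)) hφ0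
  calc
    _ ≤ max (k ^ 2) (2 * k) * ((x' - x) / 2) ^ 2 / f x' :=
      stmt_12_general (fun t _ ↦ (hfd t).hasDerivWithinAt) (fun t _ ↦ (hfd2 t).hasDerivWithinAt)
        (fun t _ ↦ ⟨hφ0 t, hφ1 t⟩) hf'm1.ge hf'_right (hfm1 ▸ hε) (hfm1 ▸ hεk.le) hx hx' hlt.le
        ⟨hy0, hyf⟩
    _ ≤ (2 * k ^ 2 + 4 * k) * ((x' - x) / 2) ^ 2 / f x' := by
      gcongr
      · linarith
      · exact max_le (by nlinarith) (by nlinarith)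
end

section
/- Define F : X_ε → ℝ² by F(x,y) = (x, y·f₀(x)/f_ε(x)). Then F maps X_ε onto X₀, and the pushforward of m_ε under F equals m₀: F_# m_ε = m₀. -/
open MeasureTheory
open Set
open scoped ENNReal

/-!
Write `s = [-1, 1]`, `f = f₀`, `g = f_ε` and `ρ t = exp (-K t²)`. Since `f'' ≥ 0` and `-1` is a
critical point with `f (-1) = 0`, convexity gives `f ≥ 0`. Both spaces are images of the strip
`s × [0, 1]` under the fibrewise scalings `(x, t) ↦ (x, t * g x)` and `(x, t) ↦ (x, t * f x)`, and
`F` composed with the first scaling is the second. The measure `m_ε` is the image of the product of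
Lebesgue measure on `s` with `ρ t dt` on `[0, 1]`, so its pushforward under `F` is the image of the
same product under the scaling by `f`. Over `{f > 0}` a fibrewise change of variables gives the
density of `m₀`; over `{f = 0}` each fibre collapses to a point of the horizontal axis carrying the
mass `∫ ρ`.
-/

lemma isMinOn_univ_of_hasDerivAt2_nonneg {f f' f'' : ℝ → ℝ} (hf : ∀ x, HasDerivAt f (f' x) x)
    (hf' : ∀ x, HasDerivAt f' (f'' x) x) (hf'' : ∀ x, 0 ≤ f'' x) {a : ℝ} (ha : f' a = 0) :
    IsMinOn f univ a := by
  have hconv : ConvexOn ℝ univ f :=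
    convexOn_of_hasDerivWithinAt2_nonneg convex_univ
      (fun x _ => (hf x).continuousAt.continuousWithinAt)
      (fun x _ => (hf x).hasDerivWithinAt) (fun x _ => (hf' x).hasDerivWithinAt) (fun x _ => hf'' x)
  refine hconv.isMinOn_of_rightDeriv_eq_zero (by simp) ?_
  rw [(hf a).hasDerivWithinAt.derivWithin (uniqueDiffWithinAt_Ioi a), ha]

lemma map_mul_right_withDensity {a : ℝ} (ha : a ≠ 0) {w : ℝ → ℝ≥0∞} (hw : Measurable w) :
    (volume.withDensity w).map (· * a) =
      volume.withDensity fun y => ENNReal.ofReal |a⁻¹| * w (y / a) := by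
  have hscale : Measurable fun y : ℝ => w (y / a) := by fun_prop
  change _ = volume.withDensity (ENNReal.ofReal |a⁻¹| • fun y => w (y / a))
  rw [withDensity_smul _ hscale, ← withDensity_smul_measure, ← Real.map_volume_mul_right ha]
  refine Measure.ext_of_lintegral _ fun h hh => ?_
  rw [lintegral_map hh (measurable_mul_const a),
    lintegral_withDensity_eq_lintegral_mul _ hw (by fun_prop),
    lintegral_withDensity_eq_lintegral_mul _ hscale hh,
    lintegral_map (hscale.mul hh) (measurable_mul_const a)]
  simp [ha]

lemma map_prodMk_right_hausdorffMeasure_restrict {X Y : Type*}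
    [EMetricSpace X] [MeasurableSpace X] [BorelSpace X] [EMetricSpace Y]
    [MeasurableSpace Y] [BorelSpace Y] [SecondCountableTopologyEither X Y]
    {d : ℝ} (hd : 0 ≤ d) {s : Set X} (hs : MeasurableSet s) (y : Y) :
    (μH[d].restrict s).map (fun x => (x, y)) = μH[d].restrict (s ×ˢ {y}) := by
  have hiso : Isometry fun x : X => (x, y) := fun x x' => by simp [Prod.edist_eq]
  have hpre : (fun x : X => (x, y)) ⁻¹' (s ×ˢ univ) = s := by ext; simp
  have hinter : (s ×ˢ univ) ∩ range (fun x : X => (x, y)) = s ×ˢ {y} := by aesop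
  have hsu : MeasurableSet (s ×ˢ (univ : Set Y)) := hs.prod .univ
  rw [← hinter, ← Measure.restrict_restrict hsu, ← hiso.map_hausdorffMeasure (.inl hd),
    Measure.restrict_map hiso.continuous.measurable hsu, hpre]

section Fiberwise

variable {α : Type*} {f g : α → ℝ} {s : Set α}

/-- The map scaling the fibre `{x} × ℝ` by the factor `g x`; it parametrizes the region under the
graph of `g` by a strip. -/
def fiberScale (g : α → ℝ) (p : α × ℝ) : α × ℝ := (p.1, p.2 * g p.1)

/-- The closed region between the zero function and the graph of `g` over the base set `s`. -/
def subgraphOn (s : Set α) (g : α → ℝ) : Set (α × ℝ) := {p | p.1 ∈ s ∧ 0 ≤ p.2 ∧ p.2 ≤ g p.1}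

lemma fiberScale_div_fiberScale {p : α × ℝ} (hp : g p.1 ≠ 0) :
    fiberScale (f / g) (fiberScale g p) = fiberScale f p := by
  simp only [fiberScale, Pi.div_apply, mul_assoc, mul_div_cancel₀ _ hp]

lemma mem_subgraphOn_iff_div_mem_Icc {p : α × ℝ} (hp : p.1 ∈ s) (hg : 0 < g p.1) :
    p ∈ subgraphOn s g ↔ p.2 / g p.1 ∈ Icc 0 1 := by
  simp [subgraphOn, hp, le_div_iff₀ hg, div_le_one hg]

lemma image_fiberScale_prod_Icc (hg : ∀ x ∈ s, 0 ≤ g x) :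
    fiberScale g '' (s ×ˢ Icc 0 1) = subgraphOn s g := by
  ext ⟨x, y⟩
  constructor
  · rintro ⟨⟨x, t⟩, ⟨hx, ht⟩, rfl, rfl⟩
    exact ⟨hx, mul_nonneg ht.1 (hg x hx), mul_le_of_le_one_left (hg x hx) ht.2⟩
  · rintro ⟨hx, hy⟩
    rcases (hg x hx).eq_or_lt with hgx | hgx
    · have : y = 0 := le_antisymm (hy.2.trans_eq hgx.symm) hy.1
      exact ⟨(x, 0), ⟨hx, left_mem_Icc.2 zero_le_one⟩, by simp [fiberScale, this]⟩
    · exact ⟨(x, y / g x), ⟨hx, (mem_subgraphOn_iff_div_mem_Icc hx hgx).1 ⟨hx, hy⟩⟩,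
        by simp [fiberScale, hgx.ne']⟩

lemma image_fiberScale_div_subgraphOn (hf : ∀ x ∈ s, 0 ≤ f x) (hg : ∀ x ∈ s, 0 < g x) :
    fiberScale (f / g) '' subgraphOn s g = subgraphOn s f := by
  rw [← image_fiberScale_prod_Icc fun x hx => (hg x hx).le, ← image_fiberScale_prod_Icc hf,
    image_image]
  exact image_congr fun p hp => fiberScale_div_fiberScale (hg p.1 hp.1).ne'

variable [MeasurableSpace α] {μ : Measure α}

lemma measurable_fiberScale (hg : Measurable g) : Measurable (fiberScale g) := by
  unfold fiberScale
  fun_prop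

lemma map_fiberScale_prod_withDensity (hg : Measurable g) (hg₀ : ∀ᵐ x ∂μ, g x ≠ 0)
    {w : ℝ → ℝ≥0∞} (hw : Measurable w) :
    (μ.prod (volume.withDensity w)).map (fiberScale g) =
      (μ.prod volume).withDensity fun z => ENNReal.ofReal |(g z.1)⁻¹| * w (z.2 / g z.1) := by
  have hdens : Measurable fun z : α × ℝ => ENNReal.ofReal |(g z.1)⁻¹| * w (z.2 / g z.1) := by
    fun_prop
  refine Measure.ext_of_lintegral _ fun h hh => ?_
  rw [lintegral_map hh (measurable_fiberScale hg),
    lintegral_prod (fun z => h (fiberScale g z))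
      (hh.comp (measurable_fiberScale hg)).aemeasurable,
    lintegral_withDensity_eq_lintegral_mul _ hdens hh, lintegral_prod _ (hdens.mul hh).aemeasurable]
  refine lintegral_congr_ae (hg₀.mono fun x hx => ?_)
  have hhx : Measurable fun y => h (x, y) := by fun_prop
  calc ∫⁻ t, h (x, t * g x) ∂volume.withDensity w
      = ∫⁻ y, h (x, y) ∂(volume.withDensity w).map (· * g x) :=
        (lintegral_map hhx (measurable_mul_const _)).symm
    _ = ∫⁻ y, ENNReal.ofReal |(g x)⁻¹| * w (y / g x) * h (x, y) := by
        rw [map_mul_right_withDensity hx hw,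
          lintegral_withDensity_eq_lintegral_mul _ (by fun_prop) hhx]
        rfl

lemma map_fiberScale_prod_of_ae_eq_zero {ν : Measure ℝ} [SFinite ν] (hg₀ : ∀ᵐ x ∂μ, g x = 0) :
    (μ.prod ν).map (fiberScale g) = ν univ • μ.map (fun x => (x, (0 : ℝ))) := by
  have hcollapse : fiberScale g =ᵐ[μ.prod ν] (fun x => (x, (0 : ℝ))) ∘ Prod.fst := by
    filter_upwards [Measure.quasiMeasurePreserving_fst.ae hg₀] with p hp
    simp [fiberScale, hp]
  rw [Measure.map_congr hcollapse, ← Measure.map_map (by fun_prop) measurable_fst,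
    Measure.map_fst_prod, Measure.map_smul]

/-- The measure `ρ t dt` on `[0, 1]`, viewed as a measure on `ℝ`; negative values of `ρ` count
as `0`. -/
noncomputable def profileMeasure (ρ : ℝ → ℝ) : Measure ℝ :=
  volume.withDensity ((Icc 0 1).indicator fun t => ENNReal.ofReal (ρ t))

instance instSFiniteProfileMeasure (ρ : ℝ → ℝ) : SFinite (profileMeasure ρ) :=
  inferInstanceAs (SFinite (volume.withDensity _))

variable {ρ : ℝ → ℝ}

lemma profileMeasure_univ (hρ : IntervalIntegrable ρ volume 0 1) (hρ₀ : ∀ t ∈ Icc 0 1, 0 ≤ ρ t) :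
    profileMeasure ρ univ = ENNReal.ofReal (∫ t in (0 : ℝ)..1, ρ t) := by
  rw [profileMeasure, withDensity_apply _ .univ, setLIntegral_univ,
    lintegral_indicator measurableSet_Icc, intervalIntegral.integral_of_le zero_le_one,
    ← integral_Icc_eq_integral_Ioc, ofReal_integral_eq_lintegral_ofReal]
  · exact (intervalIntegrable_iff_integrableOn_Icc_of_le zero_le_one).1 hρ
  · exact ae_restrict_of_forall_mem measurableSet_Icc hρ₀

/-- The measure on `subgraphOn s g` whose density on the fibre over `x` is the profile `ρ` stretched
from `[0, 1]` to `[0, g x]` without changing its mass. This describes it where `g` is positive;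
where `g x = 0` the density is `0`, because `1 / 0 = 0`. -/
noncomputable def subgraphMeasure (μ : Measure α) (s : Set α) (g : α → ℝ) (ρ : ℝ → ℝ) :
    Measure (α × ℝ) :=
  (μ.prod volume).withDensity
    ((subgraphOn s g).indicator fun z => ENNReal.ofReal (1 / g z.1 * ρ (z.2 / g z.1)))

variable [SFinite μ]

lemma map_fiberScale_prod_profileMeasure (hs : MeasurableSet s) (hg : Measurable g)
    (hg₀ : ∀ x ∈ s, 0 < g x) (hρ : Measurable ρ) :
    ((μ.restrict s).prod (profileMeasure ρ)).map (fiberScale g) = subgraphMeasure μ s g ρ := by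
  have hne : ∀ᵐ x ∂μ.restrict s, g x ≠ 0 :=
    ae_restrict_of_forall_mem hs fun x hx => (hg₀ x hx).ne'
  have hw : Measurable ((Icc 0 1).indicator fun t => ENNReal.ofReal (ρ t)) :=
    hρ.ennreal_ofReal.indicator measurableSet_Icc
  have hstrip : (μ.restrict s).prod volume = (μ.prod volume).restrict (s ×ˢ (univ : Set ℝ)) := by
    rw [← Measure.prod_restrict, Measure.restrict_univ]
  rw [profileMeasure, map_fiberScale_prod_withDensity hg hne hw, hstrip,
    ← withDensity_indicator (hs.prod .univ), subgraphMeasure]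
  congr 1 with z
  by_cases hz : z.1 ∈ s
  · have hgz := hg₀ z.1 hz
    rw [indicator_of_mem (mk_mem_prod hz (mem_univ z.2)), abs_of_pos (inv_pos.2 hgz)]
    by_cases hzg : z ∈ subgraphOn s g
    · rw [indicator_of_mem hzg, indicator_of_mem ((mem_subgraphOn_iff_div_mem_Icc hz hgz).1 hzg),
        ← ENNReal.ofReal_mul (inv_pos.2 hgz).le, one_div]
    · rw [indicator_of_notMem hzg, indicator_of_notMem
        (mt (mem_subgraphOn_iff_div_mem_Icc hz hgz).2 hzg), mul_zero]
  · rw [indicator_of_notMem fun h => hz h.1, indicator_of_notMem fun h => hz h.1]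

lemma map_fiberScale_div_subgraphMeasure (hs : MeasurableSet s) (hf : Measurable f)
    (hg : Measurable g) (hg₀ : ∀ x ∈ s, 0 < g x) (hρ : Measurable ρ) :
    (subgraphMeasure μ s g ρ).map (fiberScale (f / g)) =
      ((μ.restrict s).prod (profileMeasure ρ)).map (fiberScale f) := by
  rw [← map_fiberScale_prod_profileMeasure hs hg hg₀ hρ,
    Measure.map_map (measurable_fiberScale (hf.div hg)) (measurable_fiberScale hg)]
  refine Measure.map_congr ?_
  filter_upwards [Measure.quasiMeasurePreserving_fst.ae (ae_restrict_mem hs)] with p hp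
  exact fiberScale_div_fiberScale (hg₀ p.1 hp).ne'

lemma map_fiberScale_prod_profileMeasure_of_nonneg (hs : MeasurableSet s) (hf : Measurable f)
    (hf₀ : ∀ x ∈ s, 0 ≤ f x) (hρ : Measurable ρ) :
    ((μ.restrict s).prod (profileMeasure ρ)).map (fiberScale f) =
      profileMeasure ρ univ • (μ.restrict {x ∈ s | f x = 0}).map (fun x => (x, (0 : ℝ))) +
        subgraphMeasure μ {x ∈ s | 0 < f x} f ρ := by
  have hzero : MeasurableSet {x ∈ s | f x = 0} :=
    hs.inter (measurableSet_eq_fun hf measurable_const)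
  have hpos : MeasurableSet {x ∈ s | 0 < f x} := hs.inter (measurableSet_lt measurable_const hf)
  have hdisj : Disjoint {x ∈ s | f x = 0} {x ∈ s | 0 < f x} :=
    disjoint_left.2 fun _ h h' => h'.2.ne' h.2
  have hsplit : s = {x ∈ s | f x = 0} ∪ {x ∈ s | 0 < f x} := by
    ext x
    have := hf₀ x
    grind
  conv_lhs => rw [hsplit]
  rw [Measure.restrict_union hdisj hpos, Measure.add_prod,
    Measure.map_add _ _ (measurable_fiberScale hf),
    map_fiberScale_prod_of_ae_eq_zero (ae_restrict_of_forall_mem hzero fun _ hx => hx.2),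
    map_fiberScale_prod_profileMeasure hpos hf (fun _ hx => hx.2) hρ]

end Fiberwise

theorem stmt_15_general {s : Set ℝ} (hs : MeasurableSet s) {f g ρ : ℝ → ℝ}
    (hf : Measurable f) (hf₀ : ∀ x ∈ s, 0 ≤ f x) (hg : Measurable g) (hg₀ : ∀ x ∈ s, 0 < g x)
    (hρ : Measurable ρ) (hρ₀ : ∀ t ∈ Icc 0 1, 0 ≤ ρ t) (hρi : IntervalIntegrable ρ volume 0 1) :
    (fun p : ℝ × ℝ => (p.1, p.2 * f p.1 / g p.1)) '' subgraphOn s g = subgraphOn s f ∧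
      (subgraphMeasure volume s g ρ).map (fun p => (p.1, p.2 * f p.1 / g p.1)) =
        ENNReal.ofReal (∫ t in (0 : ℝ)..1, ρ t) •
            μH[1].restrict {p : ℝ × ℝ | p.2 = 0 ∧ p.1 ∈ s ∧ f p.1 = 0} +
          volume.withDensity ({p | p ∈ subgraphOn s f ∧ 0 < f p.1}.indicator
            fun z => ENNReal.ofReal (1 / f z.1 * ρ (z.2 / f z.1))) := by
  have hzero : MeasurableSet {x ∈ s | f x = 0} :=
    hs.inter (measurableSet_eq_fun hf measurable_const)
  have hF : (fun p : ℝ × ℝ => (p.1, p.2 * f p.1 / g p.1)) = fiberScale (f / g) := by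
    simp only [mul_div_assoc]
    rfl
  have hsegment : {p : ℝ × ℝ | p.2 = 0 ∧ p.1 ∈ s ∧ f p.1 = 0} = {x ∈ s | f x = 0} ×ˢ {0} := by
    ext
    simp [and_comm]
  have hregion : {p | p ∈ subgraphOn s f ∧ 0 < f p.1} = subgraphOn {x ∈ s | 0 < f x} f := by
    ext
    exact and_right_comm
  rw [hF, hsegment, hregion, map_fiberScale_div_subgraphMeasure hs hf hg hg₀ hρ,
    map_fiberScale_prod_profileMeasure_of_nonneg hs hf hf₀ hρ, profileMeasure_univ hρi hρ₀,
    ← map_prodMk_right_hausdorffMeasure_restrict zero_le_one hzero, hausdorffMeasure_real]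
  exact ⟨image_fiberScale_div_subgraphOn hf₀ hg₀, rfl⟩

theorem stmt_15 (ε k K : ℝ) (hε : 0 < ε) (hεk : ε < k) (hk : k < 1 / 2) (hK : 1 ≤ K)
    (φ : ℝ → ℝ) (hφc : Continuous φ) (hφ0 : ∀ x, 0 ≤ φ x) (hφ1 : ∀ x, φ x ≤ 1)
    (hφsupp : ∀ x, x ∉ Set.Icc (-k) k → φ x = 0)
    (hφint : (∫ x, φ x) = k)
    (f₀ f₀' : ℝ → ℝ)
    (hfd : ∀ x, HasDerivAt f₀ (f₀' x) x)
    (hfd2 : ∀ x, HasDerivAt f₀' (φ x) x)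
    (hf'm1 : f₀' (-1) = 0) (hfm1 : f₀ (-1) = 0)
    (fε : ℝ → ℝ) (hfε : fε = fun x => f₀ x + ε)
    (Xε X₀ : Set (ℝ × ℝ))
    (hXε : Xε = {p : ℝ × ℝ | p.1 ∈ Set.Icc (-1 : ℝ) 1 ∧ 0 ≤ p.2 ∧ p.2 ≤ fε p.1})
    (hX₀ : X₀ = {p : ℝ × ℝ | p.1 ∈ Set.Icc (-1 : ℝ) 1 ∧ 0 ≤ p.2 ∧ p.2 ≤ f₀ p.1})
    (mε m₀ : Measure (ℝ × ℝ))
    (hmε : mε = volume.withDensity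
      (Xε.indicator fun z => ENNReal.ofReal ((1 / fε z.1) * Real.exp (-K * (z.2 / fε z.1) ^ 2))))
    (hm₀ : m₀ = (ENNReal.ofReal (∫ y in (0 : ℝ)..1, Real.exp (-K * y ^ 2))) •
        ((Measure.hausdorffMeasure 1 : Measure (ℝ × ℝ)).restrict
          {p : ℝ × ℝ | p.2 = 0 ∧ p.1 ∈ Set.Icc (-1 : ℝ) 1 ∧ f₀ p.1 = 0}) +
      volume.withDensity
        (Set.indicator {p : ℝ × ℝ | p ∈ X₀ ∧ 0 < f₀ p.1}
          fun z => ENNReal.ofReal ((1 / f₀ z.1) * Real.exp (-K * (z.2 / f₀ z.1) ^ 2))))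
    (F : ℝ × ℝ → ℝ × ℝ) (hF : F = fun p => (p.1, p.2 * f₀ p.1 / fε p.1)) :
    F '' Xε = X₀ ∧ Measure.map F mε = m₀ := by
  subst hfε hXε hX₀ hmε hm₀ hF
  have hf₀ (x : ℝ) : 0 ≤ f₀ x :=
    hfm1 ▸ isMinOn_univ_of_hasDerivAt2_nonneg hfd hfd2 hφ0 hf'm1 (mem_univ x)
  have hf₀m : Measurable f₀ :=
    (continuous_iff_continuousAt.2 fun x => (hfd x).continuousAt).measurable
  have hρ : Continuous fun t : ℝ => Real.exp (-K * t ^ 2) := by fun_prop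
  exact stmt_15_general (g := fun x => f₀ x + ε) (ρ := fun t => Real.exp (-K * t ^ 2))
    measurableSet_Icc hf₀m (fun x _ => hf₀ x) (hf₀m.add_const ε)
    (fun x _ => add_pos_of_nonneg_of_pos (hf₀ x) hε) hρ.measurable
    (fun t _ => (Real.exp_pos _).le) (hρ.intervalIntegrable 0 1)
end

section
/- Let (X,d) be a compact geodesic metric space, m a finite nonzero Borel measure on X, and K ∈ ℝ. Suppose that for every pair of probability measures μ₀, μ₁ on X absolutely continuous with respect to m there exists a probability measure η on X, absolutely continuous with respect to m, which is a W₂-midpoint of μ₀ and μ₁ (i.e. W₂(μ₀,η) = W₂(η,μ₁) = (1/2)·W₂(μ₀,μ₁)) and satisfies Ent(η) ≤ (1/2)·Ent(μ₀) + (1/2)·Ent(μ₁) − (K/8)·W₂(μ₀,μ₁)². Then (X,d,m) satisfies the CD(K,∞) condition: for every pair of probability measures μ₀, μ₁ absolutely continuous with respect to m there exists a constant-speed W₂-geodesic (μ_t)_{t∈[0,1]} from μ₀ to μ₁ with Ent(μ_t) ≤ (1−t)·Ent(μ₀) + t·Ent(μ₁) − (K/2)·t·(1−t)·W₂(μ₀,μ₁)²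 for every t ∈ [0,1]. -/
open MeasureTheory

-- relative entropy with values in `EReal` (`+∞` if not absolutely continuous or not integrable)
open Classical in
noncomputable def Ent {α : Type*} [MeasurableSpace α] (m μ : Measure α) : EReal :=
  if μ ≪ m ∧ Integrable (llr μ m) μ then ((∫ z, llr μ m z ∂μ : ℝ) : EReal) else ⊤

-- squared 2-Wasserstein distance, as an infimum over couplings
noncomputable def W2sq {α : Type*} [MeasurableSpace α] (d : α → α → ℝ)
    (μ ν : Measure α) : ENNReal :=
  ⨅ (π : Measure (α × α)) (_ : Measure.map Prod.fst π = μ ∧ Measure.map Prod.snd π = ν),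
    ∫⁻ p, ENNReal.ofReal (d p.1 p.2 ^ 2) ∂π

/-!
Iterating the midpoint hypothesis produces, for every `n`, a chain of `2 ^ n + 1` equally spaced
measures from `μ₀` to `μ₁`. The function `t ↦ (1 - t) e₀ + t e₁ - K / 2 * t (1 - t) D²` satisfies
the midpoint inequality with equality, so the convexity bound passes from one dyadic level to the
next. Probability measures on a compact space are weakly compact, so the step curves through the
chains converge pointwise along an ultrafilter. Both `W₂` and the entropy are weakly lower
semicontinuous (the entropy because it is a supremum of functions
`μ ↦ ∫ φ dμ + 1 - ∫ exp φ dm` with `φ` bounded and continuous), hence the limit curve satisfies the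
entropy bound and `W₂ (μ s) (μ t) ≤ (t - s) W₂ μ₀ μ₁`; the triangle inequality through `μ s` and
`μ t` forces equality here.
-/

open Filter Topology ProbabilityTheory
open scoped ENNReal NNReal BoundedContinuousFunction

section Coupling

variable {X : Type*} [MeasurableSpace X] {μ ν σ : Measure X} {π π₁ π₂ : Measure (X × X)}

/-- `π` is a coupling (transport plan) of `μ` and `ν`: its marginals are `μ` and `ν`. -/
def IsCoupling (π : Measure (X × X)) (μ ν : Measure X) : Prop :=
  π.map Prod.fst = μ ∧ π.map Prod.snd = ν

namespace IsCoupling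

lemma isProbabilityMeasure [IsProbabilityMeasure μ] (h : IsCoupling π μ ν) :
    IsProbabilityMeasure π :=
  have : IsProbabilityMeasure (π.map Prod.fst) := h.1.symm ▸ ‹_›
  Measure.isProbabilityMeasure_of_map Prod.fst

lemma swap (h : IsCoupling π μ ν) : IsCoupling (π.map Prod.swap) ν μ :=
  ⟨(Measure.map_map measurable_fst measurable_swap).trans h.2,
    (Measure.map_map measurable_snd measurable_swap).trans h.1⟩

lemma diag (μ : Measure X) : IsCoupling (μ.map fun x => (x, x)) μ μ :=
  have hdiag : Measurable fun x : X => (x, x) := measurable_id.prodMk measurable_id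
  ⟨(Measure.map_map measurable_fst hdiag).trans Measure.map_id,
    (Measure.map_map measurable_snd hdiag).trans Measure.map_id⟩

lemma prod (μ ν : Measure X) [IsProbabilityMeasure μ] [IsProbabilityMeasure ν] :
    IsCoupling (μ.prod ν) μ ν :=
  ⟨by simp, by simp⟩

lemma exists_gluing [StandardBorelSpace X] [IsProbabilityMeasure μ] [IsProbabilityMeasure ν]
    (h₁ : IsCoupling π₁ μ ν) (h₂ : IsCoupling π₂ ν σ) :
    ∃ γ : Measure ((X × X) × X), γ.map Prod.fst = π₁ ∧ γ.map (fun p => (p.1.2, p.2)) = π₂ := by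
  have := h₁.isProbabilityMeasure
  have := h₂.isProbabilityMeasure
  have : Nonempty X := nonempty_of_isProbabilityMeasure μ
  have hdisint : (π₁.map Prod.snd) ⊗ₘ π₂.condKernel = π₂ := by
    rw [h₁.2, ← h₂.1]
    exact π₂.disintegrate π₂.condKernel
  refine ⟨π₁ ⊗ₘ (π₂.condKernel.comap Prod.snd measurable_snd), Measure.fst_compProd _ _, ?_⟩
  conv_rhs => rw [← hdisint]
  ext s hs
  rw [Measure.map_apply (by fun_prop) hs, Measure.compProd_apply hs,
    Measure.compProd_apply (hs.preimage (by fun_prop)),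
    lintegral_map (Kernel.measurable_kernel_prodMk_left hs) measurable_snd]
  rfl

end IsCoupling

/-- The pair of marginals of a probability measure on `X × X`. -/
noncomputable def marginals (π : ProbabilityMeasure (X × X)) :
    ProbabilityMeasure X × ProbabilityMeasure X :=
  (π.map measurable_fst.aemeasurable, π.map measurable_snd.aemeasurable)

lemma marginals_eq_iff {π : ProbabilityMeasure (X × X)} {μ ν : ProbabilityMeasure X} :
    marginals π = (μ, ν) ↔ IsCoupling (π : Measure (X × X)) μ ν := by
  rw [marginals, Prod.mk.injEq, ← ProbabilityMeasure.toMeasure_injective.eq_iff,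
    ← ProbabilityMeasure.toMeasure_injective.eq_iff, ProbabilityMeasure.toMeasure_map,
    ProbabilityMeasure.toMeasure_map, IsCoupling]

end Coupling

section TransportCost

variable {X : Type*} [PseudoMetricSpace X] [MeasurableSpace X] {μ ν : Measure X}
  {π : Measure (X × X)}

/-- The quadratic cost of a transport plan, written with `edist` so that it takes values in
`ℝ≥0∞` without coercions. -/
noncomputable def transportCost (π : Measure (X × X)) : ℝ≥0∞ :=
  ∫⁻ p, edist p.1 p.2 ^ 2 ∂π

lemma W2sq_dist_eq_iInf_transportCost (μ ν : Measure X) :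
    W2sq dist μ ν = ⨅ (π : Measure (X × X)) (_ : IsCoupling π μ ν), transportCost π := by
  simp only [W2sq, transportCost, edist_dist, ENNReal.ofReal_pow dist_nonneg, IsCoupling]

lemma IsCoupling.W2sq_le_transportCost (h : IsCoupling π μ ν) :
    W2sq dist μ ν ≤ transportCost π :=
  (W2sq_dist_eq_iInf_transportCost μ ν).trans_le (iInf₂_le π h)

lemma transportCost_map_swap (π : Measure (X × X)) :
    transportCost (π.map Prod.swap) = transportCost π := by
  refine (lintegral_map_equiv _ MeasurableEquiv.prodComm).trans (lintegral_congr fun p => ?_)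
  exact congrArg (· ^ 2) (edist_comm p.2 p.1)

lemma W2sq_dist_comm (μ ν : Measure X) : W2sq dist μ ν = W2sq dist ν μ := by
  have hle (μ ν : Measure X) : W2sq dist μ ν ≤ W2sq dist ν μ := by
    rw [W2sq_dist_eq_iInf_transportCost ν μ]
    exact le_iInf₂ fun π hπ => hπ.swap.W2sq_le_transportCost.trans_eq (transportCost_map_swap π)
  exact (hle μ ν).antisymm (hle ν μ)

lemma W2sq_dist_self (μ : Measure X) : W2sq dist μ μ = 0 := by
  refine nonpos_iff_eq_zero.1 ((IsCoupling.diag μ).W2sq_le_transportCost.trans ?_)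
  exact (lintegral_map_le _ _).trans_eq (by simp)

lemma transportCost_lt_top [CompactSpace X] (π : Measure (X × X)) [IsFiniteMeasure π] :
    transportCost π < ∞ := by
  have hbound (p : X × X) : edist p.1 p.2 ^ 2 ≤ Metric.ediam (Set.univ : Set X) ^ 2 := by
    gcongr
    exact Metric.edist_le_ediam_of_mem (Set.mem_univ _) (Set.mem_univ _)
  have hdiam : Metric.ediam (Set.univ : Set X) ≠ ∞ :=
    isCompact_univ.isBounded.ediam_ne_top
  refine (lintegral_mono hbound).trans_lt ?_
  rw [lintegral_const]
  exact ENNReal.mul_lt_top (ENNReal.pow_lt_top hdiam.lt_top) (measure_lt_top π _)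

lemma W2sq_dist_ne_top [CompactSpace X] (μ ν : Measure X) [IsProbabilityMeasure μ]
    [IsProbabilityMeasure ν] : W2sq dist μ ν ≠ ∞ :=
  ((IsCoupling.prod μ ν).W2sq_le_transportCost.trans_lt (transportCost_lt_top _)).ne

lemma rpow_transportCost_map_le [SecondCountableTopology X] [OpensMeasurableSpace X]
    (γ : Measure ((X × X) × X)) :
    transportCost (γ.map fun p => (p.1.1, p.2)) ^ (1 / 2 : ℝ) ≤
      transportCost (γ.map Prod.fst) ^ (1 / 2 : ℝ) +
        transportCost (γ.map fun p => (p.1.2, p.2)) ^ (1 / 2 : ℝ) := by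
  simp only [transportCost]
  rw [lintegral_map (by fun_prop) (by fun_prop), lintegral_map (by fun_prop) (by fun_prop),
    lintegral_map (by fun_prop) (by fun_prop)]
  calc (∫⁻ p, edist p.1.1 p.2 ^ 2 ∂γ) ^ (1 / 2 : ℝ)
      ≤ (∫⁻ p, (edist p.1.1 p.1.2 + edist p.1.2 p.2) ^ 2 ∂γ) ^ (1 / 2 : ℝ) := by
        gcongr
        exact edist_triangle _ _ _
    _ ≤ (∫⁻ p, edist p.1.1 p.1.2 ^ 2 ∂γ) ^ (1 / 2 : ℝ) +
          (∫⁻ p, edist p.1.2 p.2 ^ 2 ∂γ) ^ (1 / 2 : ℝ) := by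
        simpa using ENNReal.lintegral_Lp_add_le (μ := γ) (p := 2)
          (f := fun p => edist p.1.1 p.1.2) (g := fun p => edist p.1.2 p.2)
          (by fun_prop) (by fun_prop) one_le_two

end TransportCost

section OptimalTransport

variable {X : Type*} [MetricSpace X] [CompactSpace X] [MeasurableSpace X] [BorelSpace X]

lemma continuous_transportCost :
    Continuous fun π : ProbabilityMeasure (X × X) => transportCost (π : Measure (X × X)) := by
  have h := ProbabilityMeasure.continuous_lintegral_continuousMap
    (⟨fun p => nndist p.1 p.2 ^ 2, by fun_prop⟩ : C(X × X, ℝ≥0))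
  simp only [transportCost, edist_nndist, ← ENNReal.coe_pow]
  exact h

lemma continuous_marginals : Continuous (marginals (X := X)) :=
  (ProbabilityMeasure.continuous_map continuous_fst).prodMk
    (ProbabilityMeasure.continuous_map continuous_snd)

lemma exists_isCoupling_transportCost_eq (μ ν : Measure X) [IsProbabilityMeasure μ]
    [IsProbabilityMeasure ν] :
    ∃ π, IsCoupling π μ ν ∧ transportCost π = W2sq dist μ ν := by
  let μ' : ProbabilityMeasure X := ⟨μ, ‹_›⟩
  let ν' : ProbabilityMeasure X := ⟨ν, ‹_›⟩
  have hcompact : IsCompact (marginals ⁻¹' {(μ', ν')}) :=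
    (isClosed_singleton.preimage continuous_marginals).isCompact
  have hnonempty : (marginals ⁻¹' {(μ', ν')}).Nonempty :=
    ⟨⟨μ.prod ν, inferInstance⟩, marginals_eq_iff.2 (IsCoupling.prod μ ν)⟩
  obtain ⟨π, hπ, hmin⟩ := hcompact.exists_isMinOn hnonempty continuous_transportCost.continuousOn
  have hπ : IsCoupling (π : Measure (X × X)) μ ν := marginals_eq_iff.1 hπ
  refine ⟨π, hπ, le_antisymm ?_ hπ.W2sq_le_transportCost⟩
  rw [W2sq_dist_eq_iInf_transportCost]
  exact le_iInf₂ fun ρ hρ =>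
    isMinOn_iff.1 hmin ⟨ρ, hρ.isProbabilityMeasure⟩ (marginals_eq_iff.2 hρ)

lemma lowerSemicontinuous_W2sq_dist :
    LowerSemicontinuous fun p : ProbabilityMeasure X × ProbabilityMeasure X =>
      W2sq dist (p.1 : Measure X) p.2 := by
  refine lowerSemicontinuous_iff_isClosed_preimage.2 fun c => ?_
  suffices himage : (fun p : ProbabilityMeasure X × ProbabilityMeasure X =>
      W2sq dist (p.1 : Measure X) p.2) ⁻¹' Set.Iic c =
      marginals '' {π : ProbabilityMeasure (X × X) | transportCost (π : Measure (X × X)) ≤ c} by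
    rw [himage]
    exact ((isClosed_le continuous_transportCost continuous_const).isCompact.image
      continuous_marginals).isClosed
  ext ⟨μ, ν⟩
  constructor
  · intro hc
    obtain ⟨π, hπ, hcost⟩ := exists_isCoupling_transportCost_eq (μ : Measure X) ν
    exact ⟨⟨π, hπ.isProbabilityMeasure⟩, hcost.trans_le hc, marginals_eq_iff.2 hπ⟩
  · rintro ⟨π, hcost, hπ⟩
    exact (marginals_eq_iff.1 hπ).W2sq_le_transportCost.trans hcost

lemma rpow_W2sq_dist_triangle (μ ν σ : Measure X) [IsProbabilityMeasure μ]
    [IsProbabilityMeasure ν] [IsProbabilityMeasure σ] :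
    W2sq dist μ σ ^ (1 / 2 : ℝ) ≤
      W2sq dist μ ν ^ (1 / 2 : ℝ) + W2sq dist ν σ ^ (1 / 2 : ℝ) := by
  obtain ⟨π₁, h₁, hcost₁⟩ := exists_isCoupling_transportCost_eq μ ν
  obtain ⟨π₂, h₂, hcost₂⟩ := exists_isCoupling_transportCost_eq ν σ
  obtain ⟨γ, rfl, rfl⟩ := h₁.exists_gluing h₂
  have hγ : IsCoupling (γ.map fun p => (p.1.1, p.2)) μ σ := by
    constructor
    · rw [← h₁.1, Measure.map_map measurable_fst (by fun_prop),
        Measure.map_map measurable_fst measurable_fst]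
      rfl
    · rw [← h₂.2, Measure.map_map measurable_snd (by fun_prop),
        Measure.map_map measurable_snd (by fun_prop)]
      rfl
  rw [← hcost₁, ← hcost₂]
  exact (ENNReal.rpow_le_rpow hγ.W2sq_le_transportCost (by positivity)).trans
    (rpow_transportCost_map_le γ)

end OptimalTransport

section W2

variable {X : Type*} [MetricSpace X] [MeasurableSpace X]

/-- The 2-Wasserstein distance as a real number; a junk value when `W2sq dist μ ν = ∞`, which does
not happen for probability measures on a compact space. -/
noncomputable def W2 (μ ν : Measure X) : ℝ :=
  √(W2sq dist μ ν).toReal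

lemma W2_nonneg (μ ν : Measure X) : 0 ≤ W2 μ ν :=
  Real.sqrt_nonneg _

lemma W2_sq (μ ν : Measure X) : W2 μ ν ^ 2 = (W2sq dist μ ν).toReal :=
  Real.sq_sqrt ENNReal.toReal_nonneg

lemma W2_self (μ : Measure X) : W2 μ μ = 0 := by
  simp [W2, W2sq_dist_self]

variable [CompactSpace X]

lemma W2sq_dist_eq_ofReal_W2_sq (μ ν : Measure X) [IsProbabilityMeasure μ]
    [IsProbabilityMeasure ν] : W2sq dist μ ν = ENNReal.ofReal (W2 μ ν ^ 2) := by
  rw [W2_sq, ENNReal.ofReal_toReal (W2sq_dist_ne_top μ ν)]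

lemma W2sq_dist_le_ofReal_sq_iff (μ ν : Measure X) [IsProbabilityMeasure μ]
    [IsProbabilityMeasure ν] {r : ℝ} (hr : 0 ≤ r) :
    W2sq dist μ ν ≤ ENNReal.ofReal (r ^ 2) ↔ W2 μ ν ≤ r := by
  rw [W2sq_dist_eq_ofReal_W2_sq, ENNReal.ofReal_le_ofReal_iff (sq_nonneg r),
    sq_le_sq₀ (W2_nonneg μ ν) hr]

lemma W2_triangle [BorelSpace X] (μ ν σ : Measure X) [IsProbabilityMeasure μ]
    [IsProbabilityMeasure ν] [IsProbabilityMeasure σ] : W2 μ σ ≤ W2 μ ν + W2 ν σ := by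
  have hW2 (μ ν : Measure X) : W2 μ ν = (W2sq dist μ ν ^ (1 / 2 : ℝ)).toReal := by
    rw [W2, Real.sqrt_eq_rpow, ENNReal.toReal_rpow]
  have hfinite (μ ν : Measure X) [IsProbabilityMeasure μ] [IsProbabilityMeasure ν] :
      W2sq dist μ ν ^ (1 / 2 : ℝ) ≠ ∞ :=
    ENNReal.rpow_ne_top_of_nonneg (by positivity) (W2sq_dist_ne_top μ ν)
  simp only [hW2]
  rw [← ENNReal.toReal_add (hfinite μ ν) (hfinite ν σ)]
  exact ENNReal.toReal_mono (ENNReal.add_ne_top.2 ⟨hfinite μ ν, hfinite ν σ⟩)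
    (rpow_W2sq_dist_triangle μ ν σ)

lemma W2_le_mul_of_forall_succ_le [BorelSpace X] {ν : ℕ → Measure X}
    [∀ k, IsProbabilityMeasure (ν k)] {N : ℕ} {c : ℝ}
    (hstep : ∀ k < N, W2 (ν k) (ν (k + 1)) ≤ c) {i j : ℕ} (hij : i ≤ j) (hj : j ≤ N) :
    W2 (ν i) (ν j) ≤ (j - i) * c := by
  induction j, hij using Nat.le_induction with
  | base => simp [W2_self]
  | succ j _ ih =>
    calc W2 (ν i) (ν (j + 1)) ≤ W2 (ν i) (ν j) + W2 (ν j) (ν (j + 1)) := W2_triangle _ _ _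
      _ ≤ (j - i) * c + c := add_le_add (ih (by lia)) (hstep j hj)
      _ = ((j + 1 : ℕ) - i) * c := by push_cast; ring

end W2

section Fatou

variable {α : Type*} [MeasurableSpace α] {μ : Measure α}

lemma lintegral_ofReal_le_of_tendsto {f : ℕ → α → ℝ} {g : α → ℝ} {c : ℕ → ℝ} {c' : ℝ}
    (hf : ∀ n, Integrable (f n) μ) (hf₀ : ∀ n, 0 ≤ᵐ[μ] f n)
    (hfg : ∀ᵐ x ∂μ, Tendsto (fun n => f n x) atTop (𝓝 (g x)))
    (hfc : ∀ n, ∫ x, f n x ∂μ ≤ c n) (hc : Tendsto c atTop (𝓝 c')) :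
    ∫⁻ x, ENNReal.ofReal (g x) ∂μ ≤ ENNReal.ofReal c' :=
  calc ∫⁻ x, ENNReal.ofReal (g x) ∂μ
      = ∫⁻ x, liminf (fun n => ENNReal.ofReal (f n x)) atTop ∂μ :=
        lintegral_congr_ae (hfg.mono fun x hx => (ENNReal.tendsto_ofReal hx).liminf_eq.symm)
    _ ≤ liminf (fun n => ∫⁻ x, ENNReal.ofReal (f n x) ∂μ) atTop :=
        lintegral_liminf_le' fun n => (hf n).aemeasurable.ennreal_ofReal
    _ ≤ liminf (fun n => ENNReal.ofReal (c n)) atTop := by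
        refine liminf_le_liminf (Eventually.of_forall fun n => ?_)
        rw [← ofReal_integral_eq_lintegral_ofReal (hf n) (hf₀ n)]
        exact ENNReal.ofReal_le_ofReal (hfc n)
    _ = ENNReal.ofReal c' := (ENNReal.tendsto_ofReal hc).liminf_eq

lemma integrable_and_integral_le_of_tendsto {f : ℕ → α → ℝ} {g : α → ℝ} {c : ℕ → ℝ} {c' : ℝ}
    (hf : ∀ n, Integrable (f n) μ) (hf₀ : ∀ n, 0 ≤ᵐ[μ] f n)
    (hfg : ∀ᵐ x ∂μ, Tendsto (fun n => f n x) atTop (𝓝 (g x)))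
    (hfc : ∀ n, ∫ x, f n x ∂μ ≤ c n) (hc : Tendsto c atTop (𝓝 c')) :
    Integrable g μ ∧ ∫ x, g x ∂μ ≤ c' := by
  have hlintegral := lintegral_ofReal_le_of_tendsto hf hf₀ hfg hfc hc
  have hg₀ : 0 ≤ᵐ[μ] g := by
    filter_upwards [hfg, ae_all_iff.2 hf₀] with x hx hx₀ using ge_of_tendsto' hx hx₀
  have hc₀ : 0 ≤ c' :=
    ge_of_tendsto' hc fun n => (integral_nonneg_of_ae (hf₀ n)).trans (hfc n)
  have hg : Integrable g μ :=
    ⟨aestronglyMeasurable_of_tendsto_ae atTop (fun n => (hf n).1) hfg,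
      (hasFiniteIntegral_iff_ofReal hg₀).2 (hlintegral.trans_lt ENNReal.ofReal_lt_top)⟩
  rw [← ofReal_integral_eq_lintegral_ofReal hg hg₀] at hlintegral
  exact ⟨hg, (ENNReal.ofReal_le_ofReal_iff hc₀).1 hlintegral⟩

end Fatou

section LegendreBound

variable {X : Type*} [MeasurableSpace X] {m μ : Measure X} {C M : ℝ} {φ g : X → ℝ}

/-- The inequality bounding the relative entropy `∫ llr μ m ∂μ` from below by testing against `φ`,
with `C` in place of the entropy. It comes from `s t ≤ s log s - s + exp t`, so the entropy is the
smallest `C` for which it holds for all `φ`. -/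
def LegendreBound (m μ : Measure X) (C : ℝ) (φ : X → ℝ) : Prop :=
  ∫ x, φ x ∂μ ≤ C - 1 + ∫ x, Real.exp (φ x) ∂m

lemma integrable_exp_of_le [IsFiniteMeasure m] (hφ : Measurable φ) (hM : ∀ x, φ x ≤ M) :
    Integrable (fun x => Real.exp (φ x)) m := by
  refine Integrable.of_bound (by fun_prop) (Real.exp M) (ae_of_all _ fun x => ?_)
  rw [Real.norm_eq_abs, Real.abs_exp]
  exact Real.exp_le_exp.2 (hM x)

lemma legendreBound_integral_llr [IsFiniteMeasure m] [IsProbabilityMeasure μ] (hμm : μ ≪ m)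
    (hllr : Integrable (llr μ m) μ) (hφ : Integrable φ μ)
    (hexp : Integrable (fun x => Real.exp (φ x)) m) :
    LegendreBound m μ (∫ x, llr μ m x ∂μ) φ := by
  have : NeZero m := ⟨fun h => IsProbabilityMeasure.ne_zero μ
    (Measure.absolutelyContinuous_zero_iff.1 (h ▸ hμm))⟩
  have := isProbabilityMeasure_tilted hexp
  have hgibbs := InformationTheory.integral_llr_add_sub_measure_univ_nonneg
    (hμm.trans (absolutelyContinuous_tilted hexp))
    (integrable_llr_tilted_right hμm hφ hllr hexp)
  rw [integral_llr_tilted_right hμm hφ hexp hllr, probReal_univ, probReal_univ] at hgibbs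
  have hlog := Real.log_le_sub_one_of_pos (integral_exp_pos hexp)
  rw [LegendreBound]
  linarith

lemma exp_le_exp_add_exp_mul_abs_sub {x y M : ℝ} (hy : y ≤ M) :
    Real.exp y ≤ Real.exp x + Real.exp M * |x - y| := by
  have htangent : Real.exp y * (x - y + 1) ≤ Real.exp x :=
    calc Real.exp y * (x - y + 1) ≤ Real.exp y * Real.exp (x - y) := by
          gcongr
          exact Real.add_one_le_exp _
      _ = Real.exp x := by rw [← Real.exp_add, add_sub_cancel]
  have hslope : Real.exp y * -(x - y) ≤ Real.exp M * |x - y| :=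
    calc Real.exp y * -(x - y) ≤ Real.exp y * |x - y| := by
          gcongr
          exact neg_le_abs (x - y)
      _ ≤ Real.exp M * |x - y| := by gcongr
  linarith

lemma LegendreBound.add_of_integral_abs_sub_le [IsFiniteMeasure m] {ε : ℝ}
    (h : LegendreBound m μ C g) (hφμ : Integrable φ μ) (hφm : Integrable φ m) (hgμ : Integrable g μ)
    (hgm : Integrable g m) (hexp : Integrable (fun x => Real.exp (φ x)) m) (hg : Measurable g)
    (hM : ∀ x, g x ≤ M) (hμ : ∫ x, |φ x - g x| ∂μ ≤ ε) (hm : ∫ x, |φ x - g x| ∂m ≤ ε) :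
    LegendreBound m μ (C + (1 + Real.exp M) * ε) φ := by
  have habs : Integrable (fun x => Real.exp M * |φ x - g x|) m := (hφm.sub hgm).abs.const_mul _
  have hleft : ∫ x, φ x ∂μ ≤ ∫ x, g x ∂μ + ε := by
    have hdiff := (integral_mono (hφμ.sub hgμ) (hφμ.sub hgμ).abs fun x => le_abs_self _).trans hμ
    rw [integral_sub' hφμ hgμ] at hdiff
    linarith
  have hright : ∫ x, Real.exp (g x) ∂m ≤ ∫ x, Real.exp (φ x) ∂m + Real.exp M * ε :=
    calc ∫ x, Real.exp (g x) ∂m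
        ≤ ∫ x, (Real.exp (φ x) + Real.exp M * |φ x - g x|) ∂m :=
          integral_mono (integrable_exp_of_le hg hM) (hexp.add habs)
            fun x => exp_le_exp_add_exp_mul_abs_sub (hM x)
      _ = ∫ x, Real.exp (φ x) ∂m + Real.exp M * ∫ x, |φ x - g x| ∂m := by
          rw [integral_add hexp habs, integral_const_mul]
      _ ≤ ∫ x, Real.exp (φ x) ∂m + Real.exp M * ε := by gcongr
  rw [LegendreBound] at h ⊢
  linarith

lemma abs_sub_min_le {x y M : ℝ} (hx : x ≤ M) : |x - min y M| ≤ |x - y| := by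
  rcases le_total y M with hy | hy
  · rw [min_eq_left hy]
  · rw [min_eq_right hy, abs_of_nonpos (by linarith), abs_of_nonpos (by linarith)]
    linarith

lemma exists_boundedContinuous_le_integral_abs_sub_le [TopologicalSpace X]
    [TopologicalSpace.PseudoMetrizableSpace X] [BorelSpace X] {κ : Measure X} [IsFiniteMeasure κ]
    (hφ : Integrable φ κ) (hM : ∀ x, φ x ≤ M) {ε : ℝ} (hε : 0 < ε) :
    ∃ g : X →ᵇ ℝ, (∀ x, g x ≤ M) ∧ ∫ x, |φ x - g x| ∂κ ≤ ε := by
  obtain ⟨g, hg, -⟩ := hφ.exists_boundedContinuous_integral_sub_le hε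
  refine ⟨g ⊓ BoundedContinuousFunction.const X M, fun x => inf_le_right, le_trans ?_ hg⟩
  exact integral_mono (hφ.sub ((g ⊓ BoundedContinuousFunction.const X M).integrable κ)).abs
    (hφ.sub (g.integrable κ)).norm fun x => abs_sub_min_le (hM x)

lemma LegendreBound.of_boundedContinuous [TopologicalSpace X]
    [TopologicalSpace.PseudoMetrizableSpace X] [BorelSpace X] [IsFiniteMeasure m]
    [IsFiniteMeasure μ] (h : ∀ g : X →ᵇ ℝ, LegendreBound m μ C g)
    (hφ : Measurable φ) (hM : ∀ x, |φ x| ≤ M) : LegendreBound m μ C φ := by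
  have hint : Integrable φ (μ + m) :=
    Integrable.of_bound hφ.aestronglyMeasurable M (ae_of_all _ hM)
  have hle (x : X) : φ x ≤ M := (le_abs_self _).trans (hM x)
  have happrox {ε : ℝ} (hε : 0 < ε) : LegendreBound m μ (C + (1 + Real.exp M) * ε) φ := by
    obtain ⟨g, hgM, hgε⟩ := exists_boundedContinuous_le_integral_abs_sub_le hint hle hε
    have hε_of_le {κ : Measure X} (hκ : κ ≤ μ + m) : ∫ x, |φ x - g x| ∂κ ≤ ε :=
      (integral_mono_measure hκ (ae_of_all _ fun x => abs_nonneg _)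
        (hint.sub (g.integrable _)).abs).trans hgε
    exact (h g).add_of_integral_abs_sub_le hint.left_of_add_measure hint.right_of_add_measure
      (g.integrable μ) (g.integrable m) (integrable_exp_of_le hφ hle) g.continuous.measurable hgM
      (hε_of_le (Measure.le_add_right le_rfl)) (hε_of_le (Measure.le_add_left le_rfl))
  have hlim : Tendsto (fun ε : ℝ => C + (1 + Real.exp M) * ε - 1 + ∫ x, Real.exp (φ x) ∂m) (𝓝[>] 0)
      (𝓝 (C + (1 + Real.exp M) * 0 - 1 + ∫ x, Real.exp (φ x) ∂m)) :=
    (Continuous.tendsto (by fun_prop) 0).mono_left nhdsWithin_le_nhds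
  rw [mul_zero, add_zero] at hlim
  exact ge_of_tendsto hlim (by filter_upwards [self_mem_nhdsWithin] with ε hε using happrox hε)

lemma absolutelyContinuous_of_legendreBound [IsFiniteMeasure μ]
    (h : ∀ φ : X → ℝ, Measurable φ → ∀ M, (∀ x, |φ x| ≤ M) → LegendreBound m μ C φ) : μ ≪ m := by
  refine Measure.AbsolutelyContinuous.mk fun s hs hms => ?_
  have hbound (L : ℕ) : L * μ.real s ≤ C - 1 + m.real Set.univ := by
    have hL := h (s.indicator fun _ => L) (measurable_const.indicator hs) L fun x => by
      by_cases hx : x ∈ s <;> simp [hx]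
    have hexp : ∫ x, Real.exp (s.indicator (fun _ => (L : ℝ)) x) ∂m = ∫ _, 1 ∂m := by
      refine integral_congr_ae ?_
      filter_upwards [measure_eq_zero_iff_ae_notMem.1 hms] with x hx
      simp [hx]
    rw [LegendreBound, hexp, integral_indicator_const _ hs] at hL
    simpa [mul_comm] using hL
  by_contra hne
  have hpos : 0 < μ.real s := ENNReal.toReal_pos hne (measure_ne_top μ s)
  obtain ⟨L, hL⟩ := exists_nat_gt ((C - 1 + m.real Set.univ) / μ.real s)
  exact (hbound L).not_gt ((div_lt_iff₀ hpos).1 hL)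

end LegendreBound

section EntropyDuality

/-- A bounded approximation of `Real.log r`: the density `r` is truncated at height `n + 1` and
lifted by `1 / (n + 1)`. -/
noncomputable def truncLog (n : ℕ) (r : ℝ) : ℝ :=
  Real.log (min r (n + 1) + 1 / (n + 1))

variable {r : ℝ}

lemma measurable_truncLog (n : ℕ) : Measurable (truncLog n) := by
  unfold truncLog
  fun_prop

lemma exp_truncLog_le (n : ℕ) (hr : 0 ≤ r) : Real.exp (truncLog n r) ≤ r + 1 / (n + 1) := by
  rw [truncLog, Real.exp_log (by positivity)]
  gcongr
  exact min_le_left _ _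

lemma abs_truncLog_le (n : ℕ) (hr : 0 ≤ r) : |truncLog n r| ≤ Real.log (n + 2) := by
  have hn : (0 : ℝ) < n + 1 := by positivity
  have hlower : ((n : ℝ) + 2)⁻¹ ≤ min r (n + 1) + 1 / (n + 1) :=
    calc ((n : ℝ) + 2)⁻¹ ≤ 1 / (n + 1) := by
          rw [one_div]
          gcongr
          norm_num
      _ ≤ min r (n + 1) + 1 / (n + 1) := le_add_of_nonneg_left (by positivity)
  have hupper : min r (n + 1) + 1 / (n + 1) ≤ n + 2 :=
    calc min r (n + 1) + 1 / (n + 1) ≤ (n + 1) + 1 :=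
          add_le_add (min_le_right _ _) ((div_le_one hn).2 (by linarith))
      _ = n + 2 := by ring
  rw [abs_le, truncLog, ← Real.log_inv]
  exact ⟨Real.log_le_log (by positivity) hlower, Real.log_le_log (by positivity) hupper⟩

lemma neg_inv_le_truncLog (n : ℕ) (hr : 0 < r) : -r⁻¹ ≤ truncLog n r := by
  have hinv : (min r (n + 1))⁻¹ ≤ r⁻¹ + 1 := by
    rcases min_choice r (n + 1) with h | h <;> rw [h]
    · linarith
    · exact (inv_le_one_of_one_le₀ (by linarith)).trans (le_add_of_nonneg_left (by positivity))
  calc -r⁻¹ ≤ 1 - (min r (n + 1))⁻¹ := by linarith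
    _ ≤ Real.log (min r (n + 1)) := Real.one_sub_inv_le_log_of_pos (by positivity)
    _ ≤ truncLog n r := Real.log_le_log (by positivity) (le_add_of_nonneg_right (by positivity))

lemma tendsto_truncLog (hr : 0 < r) :
    Tendsto (fun n => truncLog n r) atTop (𝓝 (Real.log r)) := by
  refine Tendsto.log ?_ hr.ne'
  have hmin : Tendsto (fun n : ℕ => min r (n + 1)) atTop (𝓝 r) := by
    refine tendsto_const_nhds.congr' ?_
    filter_upwards [tendsto_natCast_atTop_atTop.eventually_ge_atTop r] with n hn
    rw [min_eq_left (by linarith)]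
  simpa using hmin.add tendsto_one_div_add_atTop_nhds_zero_nat

variable {X : Type*} [MeasurableSpace X] {m μ : Measure X} {C : ℝ}

lemma toReal_rnDeriv_pos [SigmaFinite μ] [SigmaFinite m] (hμm : μ ≪ m) :
    ∀ᵐ x ∂μ, 0 < (μ.rnDeriv m x).toReal := by
  filter_upwards [Measure.rnDeriv_pos hμm, hμm.ae_le (Measure.rnDeriv_lt_top μ m)] with x hpos htop
  exact ENNReal.toReal_pos hpos.ne' htop.ne

lemma integrable_inv_toReal_rnDeriv [IsFiniteMeasure m] [SigmaFinite μ] (hμm : μ ≪ m) :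
    Integrable (fun x => (μ.rnDeriv m x).toReal⁻¹) μ := by
  refine (Measure.integrable_toReal_rnDeriv (μ := m)).congr ?_
  filter_upwards [Measure.inv_rnDeriv hμm] with x hx
  rw [← hx, Pi.inv_apply, ENNReal.toReal_inv]

lemma integrable_truncLog_rnDeriv [IsFiniteMeasure μ] (n : ℕ) :
    Integrable (fun x => truncLog n (μ.rnDeriv m x).toReal) μ :=
  Integrable.of_bound (((measurable_truncLog n).comp
      (Measure.measurable_rnDeriv μ m).ennreal_toReal).aestronglyMeasurable)
    (Real.log (n + 2)) (ae_of_all _ fun _ => abs_truncLog_le n ENNReal.toReal_nonneg)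

lemma integral_truncLog_rnDeriv_le [IsFiniteMeasure m] [IsProbabilityMeasure μ] (hμm : μ ≪ m)
    (n : ℕ) (h : LegendreBound m μ C fun x => truncLog n (μ.rnDeriv m x).toReal) :
    ∫ x, truncLog n (μ.rnDeriv m x).toReal ∂μ ≤ C + 1 / (n + 1) * m.real Set.univ := by
  have hexp : ∫ x, Real.exp (truncLog n (μ.rnDeriv m x).toReal) ∂m ≤
      1 + 1 / (n + 1) * m.real Set.univ :=
    calc ∫ x, Real.exp (truncLog n (μ.rnDeriv m x).toReal) ∂m
        ≤ ∫ x, ((μ.rnDeriv m x).toReal + 1 / (n + 1)) ∂m :=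
          integral_mono_of_nonneg (ae_of_all _ fun _ => (Real.exp_pos _).le)
            (Measure.integrable_toReal_rnDeriv.add (integrable_const _))
            (ae_of_all _ fun _ => exp_truncLog_le n ENNReal.toReal_nonneg)
      _ = 1 + 1 / (n + 1) * m.real Set.univ := by
          rw [integral_add Measure.integrable_toReal_rnDeriv (integrable_const _),
            Measure.integral_toReal_rnDeriv hμm, probReal_univ, integral_const, smul_eq_mul,
            mul_comm]
  rw [LegendreBound] at h
  linarith

lemma integrable_llr_and_integral_llr_le_of_legendreBound [IsFiniteMeasure m]
    [IsProbabilityMeasure μ] (hμm : μ ≪ m)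
    (h : ∀ n, LegendreBound m μ C fun x => truncLog n (μ.rnDeriv m x).toReal) :
    Integrable (llr μ m) μ ∧ ∫ x, llr μ m x ∂μ ≤ C := by
  have hpos := toReal_rnDeriv_pos hμm
  have hinv := integrable_inv_toReal_rnDeriv hμm
  have hbound (n : ℕ) : ∫ x, (truncLog n (μ.rnDeriv m x).toReal + (μ.rnDeriv m x).toReal⁻¹) ∂μ ≤
      C + 1 / (n + 1) * m.real Set.univ + ∫ x, (μ.rnDeriv m x).toReal⁻¹ ∂μ := by
    rw [integral_add (integrable_truncLog_rnDeriv n) hinv]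
    gcongr
    exact integral_truncLog_rnDeriv_le hμm n (h n)
  have hlim : Tendsto (fun n : ℕ => C + 1 / ((n : ℝ) + 1) * m.real Set.univ +
      ∫ x, (μ.rnDeriv m x).toReal⁻¹ ∂μ) atTop (𝓝 (C + ∫ x, (μ.rnDeriv m x).toReal⁻¹ ∂μ)) := by
    simpa using ((tendsto_one_div_add_atTop_nhds_zero_nat (𝕜 := ℝ)).mul_const
      (m.real Set.univ)).const_add C |>.add_const (∫ x, (μ.rnDeriv m x).toReal⁻¹ ∂μ)
  -- Adding the integrable function `1 / r` makes the truncated logarithms nonnegative.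
  obtain ⟨hint, hle⟩ := integrable_and_integral_le_of_tendsto
    (g := fun x => llr μ m x + (μ.rnDeriv m x).toReal⁻¹)
    (fun n => (integrable_truncLog_rnDeriv n).add hinv)
    (fun n => hpos.mono fun x hx => neg_le_iff_add_nonneg.1 (neg_inv_le_truncLog n hx))
    (hpos.mono fun x hx => (tendsto_truncLog hx).add_const _) hbound hlim
  have hllr : Integrable (llr μ m) μ := (integrable_add_iff_integrable_left' hinv).1 hint
  rw [integral_add hllr hinv] at hle
  exact ⟨hllr, le_of_add_le_add_right hle⟩

lemma Ent_ne_bot (m μ : Measure X) : Ent m μ ≠ ⊥ := by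
  unfold Ent
  split_ifs <;> simp

lemma Ent_le_coe_iff (m μ : Measure X) :
    Ent m μ ≤ C ↔ μ ≪ m ∧ Integrable (llr μ m) μ ∧ ∫ x, llr μ m x ∂μ ≤ C := by
  unfold Ent
  split_ifs with h
  · simp [h]
  · simp only [top_le_iff, EReal.coe_ne_top, false_iff]
    tauto

variable [TopologicalSpace X] [TopologicalSpace.PseudoMetrizableSpace X] [BorelSpace X]
  [IsFiniteMeasure m]

lemma Ent_le_coe_iff_forall_legendreBound [IsProbabilityMeasure μ] :
    Ent m μ ≤ C ↔ ∀ g : X →ᵇ ℝ, LegendreBound m μ C g := by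
  rw [Ent_le_coe_iff]
  constructor
  · rintro ⟨hμm, hllr, hC⟩ g
    refine (legendreBound_integral_llr hμm hllr (g.integrable μ) (integrable_exp_of_le
      g.continuous.measurable fun x => (le_abs_self _).trans (g.norm_coe_le_norm x))).trans ?_
    gcongr
  · intro h
    have hbound (φ : X → ℝ) (hφ : Measurable φ) (M : ℝ) (hM : ∀ x, |φ x| ≤ M) :
        LegendreBound m μ C φ := LegendreBound.of_boundedContinuous h hφ hM
    have hμm := absolutelyContinuous_of_legendreBound hbound
    exact ⟨hμm, integrable_llr_and_integral_llr_le_of_legendreBound hμm fun n =>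
      hbound _ ((measurable_truncLog n).comp (Measure.measurable_rnDeriv μ m).ennreal_toReal) _
        fun _ => abs_truncLog_le n ENNReal.toReal_nonneg⟩

variable (m) in
lemma lowerSemicontinuous_Ent :
    LowerSemicontinuous fun μ : ProbabilityMeasure X => Ent m (μ : Measure X) := by
  refine lowerSemicontinuous_iff_isClosed_preimage.2 fun c => ?_
  induction c with
  | bot => simp [Set.preimage, Ent_ne_bot]
  | top => simp
  | coe C =>
    simp only [Set.preimage, Set.mem_Iic, Ent_le_coe_iff_forall_legendreBound, LegendreBound,
      Set.ofPred_forall]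
    exact isClosed_iInter fun g => isClosed_le
      (ProbabilityMeasure.continuous_integral_boundedContinuousFunction g) continuous_const

end EntropyDuality

section ConvexMidpoints

/-- The right-hand side of `K`-convexity at time `t` along a geodesic of length `D` whose endpoints
have the values `e₀` and `e₁`. -/
noncomputable def convexBound (K D e₀ e₁ t : ℝ) : ℝ :=
  (1 - t) * e₀ + t * e₁ - K / 2 * t * (1 - t) * D ^ 2

lemma convexBound_midpoint (K D e₀ e₁ a b : ℝ) :
    (convexBound K D e₀ e₁ a + convexBound K D e₀ e₁ b) / 2 - K / 8 * ((b - a) * D) ^ 2 =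
      convexBound K D e₀ e₁ ((a + b) / 2) := by
  simp only [convexBound]
  ring

lemma continuous_convexBound (K D e₀ e₁ : ℝ) : Continuous (convexBound K D e₀ e₁) := by
  unfold convexBound
  fun_prop

variable {X : Type*} [MetricSpace X] [MeasurableSpace X] {m μ₀ μ₁ : Measure X} {K : ℝ}

/-- The midpoint hypothesis: any two absolutely continuous probability measures have an absolutely
continuous `W₂`-midpoint at which the entropy satisfies the `K`-convexity inequality. -/
def HasConvexMidpoints (m : Measure X) (K : ℝ) : Prop :=
  ∀ μ₀ μ₁ : Measure X, IsProbabilityMeasure μ₀ → IsProbabilityMeasure μ₁ → μ₀ ≪ m → μ₁ ≪ m →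
    ∃ η : Measure X, IsProbabilityMeasure η ∧ η ≪ m ∧
      W2sq dist μ₀ η = W2sq dist η μ₁ ∧
      W2sq dist μ₀ μ₁ = 4 * W2sq dist μ₀ η ∧
      Ent m η ≤ ((1 / 2 : ℝ) : EReal) * Ent m μ₀ + ((1 / 2 : ℝ) : EReal) * Ent m μ₁ -
        (((K / 8) * (W2sq dist μ₀ μ₁).toReal : ℝ) : EReal)

/-- The `CD(K,∞)` condition of Lott, Sturm and Villani. -/
def CDInfty (m : Measure X) (K : ℝ) : Prop :=
  ∀ μ₀ μ₁ : Measure X, IsProbabilityMeasure μ₀ → IsProbabilityMeasure μ₁ → μ₀ ≪ m → μ₁ ≪ m →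
    ∃ μ : ℝ → Measure X, μ 0 = μ₀ ∧ μ 1 = μ₁ ∧
      (∀ t ∈ Set.Icc (0 : ℝ) 1, IsProbabilityMeasure (μ t)) ∧
      (∀ s ∈ Set.Icc (0 : ℝ) 1, ∀ t ∈ Set.Icc (0 : ℝ) 1,
        W2sq dist (μ s) (μ t) = ENNReal.ofReal ((t - s) ^ 2) * W2sq dist μ₀ μ₁) ∧
      (∀ t ∈ Set.Icc (0 : ℝ) 1,
        Ent m (μ t) ≤ ((1 - t : ℝ) : EReal) * Ent m μ₀ + ((t : ℝ) : EReal) * Ent m μ₁ -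
          (((K / 2) * t * (1 - t) * (W2sq dist μ₀ μ₁).toReal : ℝ) : EReal))

/-- `η` is a `W₂`-midpoint of `μ₀` and `μ₁` as in `HasConvexMidpoints`, expressed with the real
distance `W2` and with real upper bounds for the entropies instead of `EReal` arithmetic. -/
structure IsConvexMidpoint (m : Measure X) (K : ℝ) (μ₀ μ₁ η : Measure X) : Prop where
  isProbabilityMeasure : IsProbabilityMeasure η
  absolutelyContinuous : η ≪ m
  W2_left : W2 μ₀ η = W2 μ₀ μ₁ / 2
  W2_right : W2 η μ₁ = W2 μ₀ μ₁ / 2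
  Ent_le {e₀ e₁ : ℝ} : Ent m μ₀ ≤ e₀ → Ent m μ₁ ≤ e₁ →
    Ent m η ≤ ((e₀ + e₁) / 2 - K / 8 * W2 μ₀ μ₁ ^ 2 : ℝ)

lemma W2_eq_half_of_W2sq_eq_four_mul {ν₀ ν₁ : Measure X}
    (h : W2sq dist μ₀ μ₁ = 4 * W2sq dist ν₀ ν₁) : W2 ν₀ ν₁ = W2 μ₀ μ₁ / 2 := by
  have hsqrt : √(4 : ℝ) = 2 := by
    rw [show (4 : ℝ) = 2 ^ 2 by norm_num]
    exact Real.sqrt_sq zero_le_two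
  rw [W2, W2, h, ENNReal.toReal_mul, ENNReal.toReal_ofNat, Real.sqrt_mul zero_le_four, hsqrt]
  ring

lemma HasConvexMidpoints.exists_isConvexMidpoint (h : HasConvexMidpoints m K)
    [IsProbabilityMeasure μ₀] [IsProbabilityMeasure μ₁] (hμ₀ : μ₀ ≪ m) (hμ₁ : μ₁ ≪ m) :
    ∃ η, IsConvexMidpoint m K μ₀ μ₁ η := by
  obtain ⟨η, hη, hηm, hdist, hfour, hEnt⟩ := h μ₀ μ₁ ‹_› ‹_› hμ₀ hμ₁
  have hhalf : (0 : EReal) ≤ (1 / 2 : ℝ) := EReal.coe_nonneg.2 (by norm_num)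
  refine ⟨η, hη, hηm, W2_eq_half_of_W2sq_eq_four_mul hfour,
    W2_eq_half_of_W2sq_eq_four_mul (hdist ▸ hfour), fun {e₀ e₁} he₀ he₁ => ?_⟩
  calc Ent m η ≤ _ := hEnt
    _ ≤ ((1 / 2 : ℝ) : EReal) * e₀ + ((1 / 2 : ℝ) : EReal) * e₁ -
        ((K / 8 * (W2sq dist μ₀ μ₁).toReal : ℝ) : EReal) :=
      EReal.sub_le_sub (add_le_add (mul_le_mul_of_nonneg_left he₀ hhalf)
        (mul_le_mul_of_nonneg_left he₁ hhalf)) le_rfl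
    _ = ((e₀ + e₁) / 2 - K / 8 * W2 μ₀ μ₁ ^ 2 : ℝ) := by
      rw [W2_sq]
      norm_cast
      ring_nf

end ConvexMidpoints

section DyadicInterpolation

/-- The sequence `ν 0, η 0, ν 1, η 1, …`. -/
def interleave {α : Type*} (ν η : ℕ → α) (j : ℕ) : α :=
  if Even j then ν (j / 2) else η (j / 2)

lemma interleave_two_mul {α : Type*} (ν η : ℕ → α) (k : ℕ) : interleave ν η (2 * k) = ν k := by
  simp [interleave]

lemma interleave_two_mul_add_one {α : Type*} (ν η : ℕ → α) (k : ℕ) :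
    interleave ν η (2 * k + 1) = η k := by
  simp [interleave, Nat.mul_add_div]

variable {X : Type*} [MetricSpace X] [MeasurableSpace X] {m μ₀ μ₁ : Measure X} {K : ℝ} {n : ℕ}
  {ν η : ℕ → Measure X}

/-- `ν 0, …, ν (2 ^ n)` are equally spaced measures from `μ₀` to `μ₁` along which the entropy is
`K`-convex; the measures `ν k` with `2 ^ n < k` carry no information. -/
structure IsDyadicInterpolation (m : Measure X) (K : ℝ) (μ₀ μ₁ : Measure X) (n : ℕ)
    (ν : ℕ → Measure X) : Prop where
  isProbabilityMeasure (k : ℕ) : IsProbabilityMeasure (ν k)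
  absolutelyContinuous (k : ℕ) : ν k ≪ m
  left : ν 0 = μ₀
  right : ν (2 ^ n) = μ₁
  W2_succ {k : ℕ} : k < 2 ^ n → W2 (ν k) (ν (k + 1)) = W2 μ₀ μ₁ / 2 ^ n
  Ent_le {e₀ e₁ : ℝ} : Ent m μ₀ ≤ e₀ → Ent m μ₁ ≤ e₁ → ∀ {k : ℕ}, k ≤ 2 ^ n →
    Ent m (ν k) ≤ (convexBound K (W2 μ₀ μ₁) e₀ e₁ (k / 2 ^ n) : ℝ)

namespace IsDyadicInterpolation

lemma zero [IsProbabilityMeasure μ₀] [IsProbabilityMeasure μ₁] (hμ₀ : μ₀ ≪ m) (hμ₁ : μ₁ ≪ m) :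
    IsDyadicInterpolation m K μ₀ μ₁ 0 fun k => if k = 0 then μ₀ else μ₁ where
  isProbabilityMeasure k := by split_ifs <;> infer_instance
  absolutelyContinuous k := by split_ifs <;> assumption
  left := if_pos rfl
  right := if_neg one_ne_zero
  W2_succ {k} hk := by
    obtain rfl : k = 0 := Nat.lt_one_iff.1 hk
    simp
  Ent_le {_ _} he₀ he₁ {k} hk := by
    rcases Nat.le_one_iff_eq_zero_or_eq_one.1 hk with rfl | rfl
    · simpa [convexBound] using he₀
    · simpa [convexBound] using he₁

lemma Ent_midpoint_le (hν : IsDyadicInterpolation m K μ₀ μ₁ n ν) {k : ℕ} (hk : k < 2 ^ n)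
    {η : Measure X} (hη : IsConvexMidpoint m K (ν k) (ν (k + 1)) η) {e₀ e₁ : ℝ}
    (he₀ : Ent m μ₀ ≤ e₀) (he₁ : Ent m μ₁ ≤ e₁) :
    Ent m η ≤
      (convexBound K (W2 μ₀ μ₁) e₀ e₁ ((2 * k + 1 : ℕ) / 2 ^ (n + 1)) : ℝ) := by
  refine (hη.Ent_le (hν.Ent_le he₀ he₁ hk.le) (hν.Ent_le he₀ he₁ hk)).trans_eq ?_
  have hstep : W2 (ν k) (ν (k + 1)) = ((k + 1 : ℕ) / 2 ^ n - k / 2 ^ n) * W2 μ₀ μ₁ := by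
    rw [hν.W2_succ hk]
    push_cast
    ring
  rw [hstep, convexBound_midpoint]
  congr 2
  push_cast
  ring

lemma refine (hν : IsDyadicInterpolation m K μ₀ μ₁ n ν)
    (hη : ∀ k, IsConvexMidpoint m K (ν k) (ν (k + 1)) (η k)) :
    IsDyadicInterpolation m K μ₀ μ₁ (n + 1) (interleave ν η) where
  isProbabilityMeasure j := by
    rw [interleave]
    split_ifs
    exacts [hν.isProbabilityMeasure _, (hη _).isProbabilityMeasure]
  absolutelyContinuous j := by
    rw [interleave]
    split_ifs
    exacts [hν.absolutelyContinuous _, (hη _).absolutelyContinuous]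
  left := (interleave_two_mul ν η 0).trans hν.left
  right := by rw [pow_succ', interleave_two_mul, hν.right]
  W2_succ {j} hj := by
    have hhalf : W2 μ₀ μ₁ / 2 ^ (n + 1) = W2 μ₀ μ₁ / 2 ^ n / 2 := by rw [pow_succ, div_div]
    obtain ⟨k, rfl | rfl⟩ := Nat.even_or_odd' j
    · rw [interleave_two_mul, interleave_two_mul_add_one, (hη k).W2_left, hhalf,
        hν.W2_succ (by lia)]
    · rw [interleave_two_mul_add_one, show 2 * k + 1 + 1 = 2 * (k + 1) by ring,
        interleave_two_mul, (hη k).W2_right, hhalf, hν.W2_succ (by lia)]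
  Ent_le {_ _} he₀ he₁ {j} hj := by
    obtain ⟨k, rfl | rfl⟩ := Nat.even_or_odd' j
    · rw [interleave_two_mul, Nat.cast_mul, Nat.cast_ofNat, pow_succ',
        mul_div_mul_left _ _ two_ne_zero]
      exact hν.Ent_le he₀ he₁ (by lia)
    · rw [interleave_two_mul_add_one]
      exact hν.Ent_midpoint_le (by lia) (hη k) he₀ he₁

lemma W2_le [CompactSpace X] [BorelSpace X] (hν : IsDyadicInterpolation m K μ₀ μ₁ n ν) {i j : ℕ}
    (hij : i ≤ j) (hj : j ≤ 2 ^ n) :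
    W2 (ν i) (ν j) ≤ (j / 2 ^ n - i / 2 ^ n) * W2 μ₀ μ₁ := by
  have := hν.isProbabilityMeasure
  refine (W2_le_mul_of_forall_succ_le (fun k hk => (hν.W2_succ hk).le) hij hj).trans_eq ?_
  ring

end IsDyadicInterpolation

lemma HasConvexMidpoints.exists_isDyadicInterpolation (h : HasConvexMidpoints m K)
    [IsProbabilityMeasure μ₀] [IsProbabilityMeasure μ₁] (hμ₀ : μ₀ ≪ m) (hμ₁ : μ₁ ≪ m) (n : ℕ) :
    ∃ ν, IsDyadicInterpolation m K μ₀ μ₁ n ν := by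
  induction n with
  | zero => exact ⟨_, .zero hμ₀ hμ₁⟩
  | succ n ih =>
    obtain ⟨ν, hν⟩ := ih
    have := hν.isProbabilityMeasure
    choose η hη using fun k => h.exists_isConvexMidpoint (hν.absolutelyContinuous k)
      (hν.absolutelyContinuous (k + 1))
    exact ⟨_, hν.refine hη⟩

end DyadicInterpolation

section WeakLimit

lemma le_of_tendsto_of_lowerSemicontinuous {α β ι : Type*} [TopologicalSpace α]
    [CompleteLinearOrder β] [TopologicalSpace β] [OrderTopology β] {f : α → β} {l : Filter ι}
    [l.NeBot] {u : ι → α} {a : α} {c : ι → β} {b : β} (hf : LowerSemicontinuous f)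
    (hu : Tendsto u l (𝓝 a)) (hc : Tendsto c l (𝓝 b)) (hle : ∀ i, f (u i) ≤ c i) : f a ≤ b :=
  hf.isClosed_epigraph.mem_of_tendsto (hu.prodMk_nhds hc) (Eventually.of_forall hle)

lemma tendsto_floor_mul_two_pow_div {t : ℝ} (ht : 0 ≤ t) :
    Tendsto (fun n : ℕ => (⌊t * 2 ^ n⌋₊ : ℝ) / 2 ^ n) atTop (𝓝 t) :=
  (tendsto_nat_floor_mul_div_atTop ht).comp (tendsto_pow_atTop_atTop_of_one_lt one_lt_two)

lemma floor_mul_two_pow_le {t : ℝ} (ht : t ≤ 1) (n : ℕ) : ⌊t * 2 ^ n⌋₊ ≤ 2 ^ n := by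
  refine Nat.floor_le_of_le ?_
  push_cast
  exact mul_le_of_le_one_left (by positivity) ht

variable {X : Type*} [MetricSpace X] [MeasurableSpace X] {m μ₀ μ₁ : Measure X} {K : ℝ} {n : ℕ}
  {ν : ℕ → Measure X}

namespace IsDyadicInterpolation

/-- The step curve through a dyadic interpolation: the value at time `t` is the measure at the
largest dyadic time `k / 2 ^ n ≤ t`. -/
noncomputable def stepCurve (hν : IsDyadicInterpolation m K μ₀ μ₁ n ν) (t : ℝ) :
    ProbabilityMeasure X :=
  ⟨ν ⌊t * 2 ^ n⌋₊, hν.isProbabilityMeasure _⟩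

lemma coe_stepCurve_zero (hν : IsDyadicInterpolation m K μ₀ μ₁ n ν) :
    (hν.stepCurve 0 : Measure X) = μ₀ := by
  simp [stepCurve, hν.left]

lemma coe_stepCurve_one (hν : IsDyadicInterpolation m K μ₀ μ₁ n ν) :
    (hν.stepCurve 1 : Measure X) = μ₁ := by
  have hfloor : ⌊(1 : ℝ) * 2 ^ n⌋₊ = 2 ^ n := by
    rw [one_mul]
    exact_mod_cast Nat.floor_natCast (R := ℝ) (2 ^ n)
  exact (congrArg ν hfloor).trans hν.right

lemma W2_stepCurve_le [CompactSpace X] [BorelSpace X] (hν : IsDyadicInterpolation m K μ₀ μ₁ n ν)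
    {s t : ℝ} (hst : s ≤ t) (ht : t ≤ 1) :
    W2 (hν.stepCurve s : Measure X) (hν.stepCurve t) ≤
      (⌊t * 2 ^ n⌋₊ / 2 ^ n - ⌊s * 2 ^ n⌋₊ / 2 ^ n) * W2 μ₀ μ₁ :=
  hν.W2_le (Nat.floor_mono (by gcongr)) (floor_mul_two_pow_le ht n)

lemma Ent_stepCurve_le (hν : IsDyadicInterpolation m K μ₀ μ₁ n ν) {e₀ e₁ : ℝ}
    (he₀ : Ent m μ₀ ≤ e₀) (he₁ : Ent m μ₁ ≤ e₁) {t : ℝ} (ht : t ≤ 1) :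
    Ent m (hν.stepCurve t) ≤
      (convexBound K (W2 μ₀ μ₁) e₀ e₁ (⌊t * 2 ^ n⌋₊ / 2 ^ n) : ℝ) :=
  hν.Ent_le he₀ he₁ (floor_mul_two_pow_le ht n)

end IsDyadicInterpolation

variable [BorelSpace X] {ν : ℕ → ℕ → Measure X} {l : Filter ℕ} [l.NeBot]
  {p q : ProbabilityMeasure X} {s t : ℝ}

lemma Ent_le_of_tendsto_stepCurve [IsFiniteMeasure m]
    (hν : ∀ n, IsDyadicInterpolation m K μ₀ μ₁ n (ν n)) (hl : l ≤ atTop)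
    (hp : Tendsto (fun n => (hν n).stepCurve t) l (𝓝 p)) {e₀ e₁ : ℝ} (he₀ : Ent m μ₀ ≤ e₀)
    (he₁ : Ent m μ₁ ≤ e₁) (ht₀ : 0 ≤ t) (ht₁ : t ≤ 1) :
    Ent m p ≤ (convexBound K (W2 μ₀ μ₁) e₀ e₁ t : ℝ) :=
  le_of_tendsto_of_lowerSemicontinuous (f := fun μ : ProbabilityMeasure X => Ent m (μ : Measure X))
    (lowerSemicontinuous_Ent m) hp
    (((continuous_coe_real_ereal.comp (continuous_convexBound K (W2 μ₀ μ₁) e₀ e₁)).tendsto t).comp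
      ((tendsto_floor_mul_two_pow_div ht₀).mono_left hl))
    fun n => (hν n).Ent_stepCurve_le he₀ he₁ ht₁

variable [CompactSpace X]

lemma W2_le_of_tendsto_stepCurve (hν : ∀ n, IsDyadicInterpolation m K μ₀ μ₁ n (ν n))
    (hl : l ≤ atTop) (hp : Tendsto (fun n => (hν n).stepCurve s) l (𝓝 p))
    (hq : Tendsto (fun n => (hν n).stepCurve t) l (𝓝 q)) (hs : 0 ≤ s) (hst : s ≤ t) (ht : t ≤ 1) :
    W2 (p : Measure X) q ≤ (t - s) * W2 μ₀ μ₁ := by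
  have htimes : Tendsto (fun n : ℕ => ((⌊t * 2 ^ n⌋₊ / 2 ^ n - ⌊s * 2 ^ n⌋₊ / 2 ^ n : ℝ) *
      W2 μ₀ μ₁)) l (𝓝 ((t - s) * W2 μ₀ μ₁)) :=
    (((tendsto_floor_mul_two_pow_div (hs.trans hst)).sub
      (tendsto_floor_mul_two_pow_div hs)).mul_const _).mono_left hl
  rw [← W2sq_dist_le_ofReal_sq_iff _ _ (mul_nonneg (sub_nonneg.2 hst) (W2_nonneg μ₀ μ₁))]
  refine le_of_tendsto_of_lowerSemicontinuous
    (f := fun r : ProbabilityMeasure X × ProbabilityMeasure X => W2sq dist (r.1 : Measure X) r.2)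
    lowerSemicontinuous_W2sq_dist (hp.prodMk_nhds hq)
    (ENNReal.tendsto_ofReal (htimes.pow 2)) fun n => ?_
  have hle := (hν n).W2_stepCurve_le hst ht
  exact (W2sq_dist_le_ofReal_sq_iff _ _ ((W2_nonneg _ _).trans hle)).2 hle

lemma HasConvexMidpoints.exists_curve [IsFiniteMeasure m] [IsProbabilityMeasure μ₀]
    [IsProbabilityMeasure μ₁] (h : HasConvexMidpoints m K) (hμ₀ : μ₀ ≪ m) (hμ₁ : μ₁ ≪ m) :
    ∃ p : ℝ → ProbabilityMeasure X, (p 0 : Measure X) = μ₀ ∧ (p 1 : Measure X) = μ₁ ∧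
      (∀ s t, 0 ≤ s → s ≤ t → t ≤ 1 → W2 (p s : Measure X) (p t) ≤ (t - s) * W2 μ₀ μ₁) ∧
      ∀ e₀ e₁ : ℝ, Ent m μ₀ ≤ e₀ → Ent m μ₁ ≤ e₁ → ∀ t, 0 ≤ t → t ≤ 1 →
        Ent m (p t) ≤ (convexBound K (W2 μ₀ μ₁) e₀ e₁ t : ℝ) := by
  choose ν hν using h.exists_isDyadicInterpolation hμ₀ hμ₁
  have hcompact (t : ℝ) :
      ∃ p, Tendsto (fun n => (hν n).stepCurve t) (hyperfilter ℕ : Filter ℕ) (𝓝 p) :=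
    ⟨_, ((hyperfilter ℕ).map fun n => (hν n).stepCurve t).le_nhds_lim⟩
  choose p hp using hcompact
  have hl : (hyperfilter ℕ : Filter ℕ) ≤ atTop := Nat.hyperfilter_le_atTop
  have hp_eq {t : ℝ} {μ : Measure X} [hμ : IsProbabilityMeasure μ]
      (hstep : ∀ n, ((hν n).stepCurve t : Measure X) = μ) : (p t : Measure X) = μ := by
    have hconst (n : ℕ) : (hν n).stepCurve t = ⟨μ, hμ⟩ := Subtype.ext (hstep n)
    have hlim : Tendsto (fun n => (hν n).stepCurve t) (hyperfilter ℕ : Filter ℕ) (𝓝 ⟨μ, hμ⟩) :=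
      tendsto_const_nhds.congr fun n => (hconst n).symm
    have heq : p t = ⟨μ, hμ⟩ := tendsto_nhds_unique (hp t) hlim
    rw [heq, ProbabilityMeasure.coe_mk]
  exact ⟨p, hp_eq fun n => (hν n).coe_stepCurve_zero, hp_eq fun n => (hν n).coe_stepCurve_one,
    fun s t => W2_le_of_tendsto_stepCurve hν hl (hp s) (hp t),
    fun e₀ e₁ he₀ he₁ t => Ent_le_of_tendsto_stepCurve hν hl (hp t) he₀ he₁⟩

end WeakLimit

section CDInfty

lemma le_coe_mul_add_coe_mul_sub_coe {a b x : EReal} (ha : a ≠ ⊥) (hb : b ≠ ⊥) {s t c : ℝ}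
    (hs : 0 < s) (ht : 0 < t)
    (h : ∀ e₀ e₁ : ℝ, a = e₀ → b = e₁ → x ≤ (s * e₀ + t * e₁ - c : ℝ)) :
    x ≤ (s : EReal) * a + (t : EReal) * b - c := by
  induction a with
  | bot => exact absurd rfl ha
  | top =>
    have htb : (t : EReal) * b ≠ ⊥ := by
      induction b with
      | bot => exact absurd rfl hb
      | top => simp [EReal.coe_mul_top_of_pos ht]
      | coe e₁ => exact EReal.coe_ne_bot (t * e₁)
    simp [EReal.coe_mul_top_of_pos hs, EReal.top_add_of_ne_bot htb]
  | coe e₀ =>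
    induction b with
    | bot => exact absurd rfl hb
    | top => simp [EReal.coe_mul_top_of_pos ht, ← EReal.coe_mul]
    | coe e₁ => exact_mod_cast h e₀ e₁ rfl rfl

variable {X : Type*} [MetricSpace X] [CompactSpace X] [MeasurableSpace X] [BorelSpace X]

lemma W2_eq_mul_of_forall_W2_le {p : ℝ → Measure X} [∀ t, IsProbabilityMeasure (p t)]
    (hp : ∀ s t, 0 ≤ s → s ≤ t → t ≤ 1 → W2 (p s) (p t) ≤ (t - s) * W2 (p 0) (p 1)) {s t : ℝ}
    (hs : 0 ≤ s) (hst : s ≤ t) (ht : t ≤ 1) : W2 (p s) (p t) = (t - s) * W2 (p 0) (p 1) := by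
  refine (hp s t hs hst ht).antisymm ?_
  have hsplit : W2 (p 0) (p 1) ≤ W2 (p 0) (p s) + W2 (p s) (p t) + W2 (p t) (p 1) :=
    (W2_triangle _ (p t) _).trans (by gcongr; exact W2_triangle _ _ _)
  have hleft := hp 0 s le_rfl hs (hst.trans ht)
  have hright := hp t 1 (hs.trans hst) ht le_rfl
  linarith

lemma W2sq_dist_eq_ofReal_sq_mul_of_forall_W2_le {p : ℝ → Measure X}
    [∀ t, IsProbabilityMeasure (p t)]
    (hp : ∀ s t, 0 ≤ s → s ≤ t → t ≤ 1 → W2 (p s) (p t) ≤ (t - s) * W2 (p 0) (p 1)) {s t : ℝ}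
    (hs : s ∈ Set.Icc (0 : ℝ) 1) (ht : t ∈ Set.Icc (0 : ℝ) 1) :
    W2sq dist (p s) (p t) = ENNReal.ofReal ((t - s) ^ 2) * W2sq dist (p 0) (p 1) := by
  wlog hst : s ≤ t generalizing s t
  · rw [W2sq_dist_comm, this ht hs (le_of_not_ge hst), ← neg_sub t s, neg_sq]
  rw [W2sq_dist_eq_ofReal_W2_sq, W2_eq_mul_of_forall_W2_le hp hs.1 hst ht.2, mul_pow,
    ENNReal.ofReal_mul (sq_nonneg _), ← W2sq_dist_eq_ofReal_W2_sq]

theorem stmt_17_general {m : Measure X} [IsFiniteMeasure m] {K : ℝ}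
    (h : HasConvexMidpoints m K) : CDInfty m K := by
  intro μ₀ μ₁ _ _ hμ₀ hμ₁
  obtain ⟨p, rfl, rfl, hW2, hEnt⟩ := h.exists_curve hμ₀ hμ₁
  refine ⟨fun t => p t, rfl, rfl, fun t _ => inferInstance, fun s hs t ht =>
    W2sq_dist_eq_ofReal_sq_mul_of_forall_W2_le hW2 hs ht, fun t ⟨ht₀, ht₁⟩ => ?_⟩
  rcases ht₀.eq_or_lt with rfl | ht_pos
  · simp
  rcases ht₁.eq_or_lt with rfl | ht_lt
  · simp
  rw [← W2_sq]
  exact le_coe_mul_add_coe_mul_sub_coe (Ent_ne_bot m _) (Ent_ne_bot m _) (sub_pos.2 ht_lt) ht_pos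
    fun e₀ e₁ he₀ he₁ => hEnt e₀ e₁ he₀.le he₁.le t ht₀ ht₁

end CDInfty

theorem stmt_17 {Y : Type*} [MetricSpace Y] [CompactSpace Y]
    [MeasurableSpace Y] [BorelSpace Y]
    (hgeo : ∀ p q : Y, ∃ γ : ℝ → Y, γ 0 = p ∧ γ 1 = q ∧
      ∀ s ∈ Set.Icc (0 : ℝ) 1, ∀ t ∈ Set.Icc (0 : ℝ) 1,
        dist (γ s) (γ t) = |t - s| * dist p q)
    (m : Measure Y) [IsFiniteMeasure m] (hm : m ≠ 0)
    (K : ℝ)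
    (hmid : ∀ μ₀ μ₁ : Measure Y, IsProbabilityMeasure μ₀ → IsProbabilityMeasure μ₁ →
      μ₀ ≪ m → μ₁ ≪ m →
      ∃ η : Measure Y, IsProbabilityMeasure η ∧ η ≪ m ∧
        W2sq dist μ₀ η = W2sq dist η μ₁ ∧
        W2sq dist μ₀ μ₁ = 4 * W2sq dist μ₀ η ∧
        Ent m η ≤ ((1 / 2 : ℝ) : EReal) * Ent m μ₀ + ((1 / 2 : ℝ) : EReal) * Ent m μ₁ -
          (((K / 8) * (W2sq dist μ₀ μ₁).toReal : ℝ) : EReal)) :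
    ∀ μ₀ μ₁ : Measure Y, IsProbabilityMeasure μ₀ → IsProbabilityMeasure μ₁ →
      μ₀ ≪ m → μ₁ ≪ m →
      ∃ μ : ℝ → Measure Y,
        μ 0 = μ₀ ∧ μ 1 = μ₁ ∧
        (∀ t ∈ Set.Icc (0 : ℝ) 1, IsProbabilityMeasure (μ t)) ∧
        (∀ s ∈ Set.Icc (0 : ℝ) 1, ∀ t ∈ Set.Icc (0 : ℝ) 1,
          W2sq dist (μ s) (μ t) = ENNReal.ofReal ((t - s) ^ 2) * W2sq dist μ₀ μ₁) ∧
        (∀ t ∈ Set.Icc (0 : ℝ) 1,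
          Ent m (μ t) ≤ ((1 - t : ℝ) : EReal) * Ent m μ₀ + ((t : ℝ) : EReal) * Ent m μ₁ -
            (((K / 2) * t * (1 - t) * (W2sq dist μ₀ μ₁).toReal : ℝ) : EReal)) :=
  stmt_17_general hmid
end
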